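/- Let 0 < α < n, 0 ≤ γ ≤ α, 1 < p < n/γ, 1/p − 1/q = γ/n, λ₁, λ₂ > 0. Then the fractional maximal operator M_α is bounded from LM^p(φ_{λ₁}, w_{β₁}^p) to LM^q(φ_{λ₂}, w_{β₂}^q) if and only if β₂ − β₁ − (n−λ₁)/p + (n−λ₂)/q + α = 0 and α ≤ β₁ + (n−λ₁)/p < n. -/

import Mathlib

open MeasureTheory Metric Set ENNReal

noncomputable section

abbrev Euc (n : ℕ) := EuclideanSpace ℝ (Fin n)

/-- Extended-real weighted local Morrey norm (sup over balls centered at the origin). -/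
def lmNormE (n : ℕ) (p : ℝ) (φ : ℝ → ℝ≥0∞) (w : Euc n → ℝ≥0∞) (g : Euc n → ℝ≥0∞) : ℝ≥0∞ :=
  ⨆ (R : ℝ) (_ : 0 < R),
    ((φ R)⁻¹ * ∫⁻ x in ball (0 : Euc n) R, g x ^ p * w x) ^ (1 / p)

def lmNorm (n : ℕ) (p : ℝ) (φ : ℝ → ℝ≥0∞) (w : Euc n → ℝ≥0∞) (f : Euc n → ℝ) : ℝ≥0∞ :=
  lmNormE n p φ w (fun x => ENNReal.ofReal |f x|)

/-- Weak weighted local Morrey norm (for nonnegative extended-real valued functions). -/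
def wlmNormE (n : ℕ) (q : ℝ) (ψ : ℝ → ℝ≥0∞) (v : Euc n → ℝ≥0∞) (g : Euc n → ℝ≥0∞) : ℝ≥0∞ :=
  ⨆ (R : ℝ) (_ : 0 < R) (t : ℝ≥0∞) (_ : 0 < t),
    t * ((ψ R)⁻¹ * ∫⁻ x in {x : Euc n | x ∈ ball (0 : Euc n) R ∧ t < g x}, v x) ^ (1 / q)

def Doubling (φ : ℝ → ℝ≥0∞) : Prop := ∃ C : ℝ≥0∞, C < ⊤ ∧ ∀ R > (0 : ℝ), φ (2 * R) ≤ C * φ R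

def RevDoubling (φ : ℝ → ℝ≥0∞) : Prop :=
  ∃ C : ℝ≥0∞, C < ⊤ ∧ ∀ R > (0 : ℝ), ∀ b ∈ Set.Ioo (0 : ℝ) 1,
    ∑' j : ℕ, φ (b ^ j * R) ≤ C * φ R

/-- The fractional maximal operator `M_α` (the Hardy–Littlewood maximal
operator when `α = 0`). -/
def fracMax (n : ℕ) (α : ℝ) (g : Euc n → ℝ≥0∞) (x : Euc n) : ℝ≥0∞ :=
  ⨆ (c : Euc n) (r : ℝ) (_ : 0 < r ∧ x ∈ ball c r),
    (volume (ball c r)) ^ (α / (n : ℝ) - 1) * ∫⁻ y in ball c r, g y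

/-- The fractional integral (Riesz potential) `I_α`. -/
def fracInt (n : ℕ) (α : ℝ) (g : Euc n → ℝ≥0∞) (x : Euc n) : ℝ≥0∞ :=
  ∫⁻ y, g y * ENNReal.ofReal (‖x - y‖ ^ (α - (n : ℝ)))

/-- The Köthe dual norm of a weighted local Morrey space, evaluated on a
nonnegative (extended-real valued) function. -/
def kdualLM (n : ℕ) (p : ℝ) (φ : ℝ → ℝ≥0∞) (w : Euc n → ℝ≥0∞) (g : Euc n → ℝ≥0∞) : ℝ≥0∞ :=
  ⨆ (f : Euc n → ℝ) (_ : Measurable f ∧ lmNorm n p φ w f ≤ 1),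
    ∫⁻ x, ENNReal.ofReal |f x| * g x

/-- The characteristic function of a ball, as an `ℝ≥0∞` valued function. -/
def chiE (n : ℕ) (c : Euc n) (r : ℝ) : Euc n → ℝ≥0∞ := (ball c r).indicator fun _ => (1 : ℝ≥0∞)

/-- Samko-type Morrey parameter function `φ_λ(B) = r_B ^ λ`. -/
def phiS (lam : ℝ) : ℝ → ℝ≥0∞ := fun R => ENNReal.ofReal (R ^ lam)

/-- Power weight `w_β(x) = |x| ^ β` (raised to the exponent `s`). -/
def powW (n : ℕ) (β s : ℝ) : Euc n → ℝ≥0∞ := fun x => ENNReal.ofReal (‖x‖ ^ (β * s))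

/-!
Under the dilation `x ↦ t • x` the operator `M_α` and the Morrey norms with weight `|x| ^ β` are
multiplied by powers of `t`, so bounds on the shell `1 / 2 ≤ |x| < 1` propagate to all dyadic
shells. Write `A = β₁ + (n - λ₁) / p`.

Sufficiency. For `x` in this shell, balls of radius at most `1 / 8` through `x` stay in
`1 / 4 ≤ |y| < 2`, where the weights are bounded above and below and `M_α` is dominated by `M_γ`,
which is bounded from `L^p` to `L^q` by the Hardy–Littlewood theorem and Hedberg's pointwise
inequality. A larger ball lies in a centred ball of comparable radius `R`; Hölder's inequality on
dyadic shells and a geometric series, convergent because `A < n`, bound the integral over it by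
`R ^ (n - A)`, and the resulting average `R ^ (α - A)` is bounded because `α ≤ A`. Since `λ₂ > 0`,
the estimates on the shells of a centred ball also sum geometrically.

Necessity. Dilating a function supported in one shell forces the homogeneity relation. The function
`|x| ^ (-A)` has finite norm because `λ₁ > 0`, but its image under `M_α` is identically infinite if
`A ≥ n`, when it is not integrable near the origin, and if `A < α`, when its averages over large
balls are unbounded.
-/

lemma phiS_ne_top (s t : ℝ) : phiS s t ≠ ⊤ := ENNReal.ofReal_ne_top

lemma phiS_pos (s : ℝ) {t : ℝ} (ht : 0 < t) : 0 < phiS s t :=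
  ENNReal.ofReal_pos.2 (Real.rpow_pos_of_pos ht s)

lemma phiS_ne_zero (s : ℝ) {t : ℝ} (ht : 0 < t) : phiS s t ≠ 0 := (phiS_pos s ht).ne'

lemma phiS_zero (t : ℝ) : phiS 0 t = 1 := by simp only [phiS, Real.rpow_zero, ofReal_one]

lemma phiS_add (s s' : ℝ) {t : ℝ} (ht : 0 < t) : phiS (s + s') t = phiS s t * phiS s' t := by
  rw [phiS, phiS, phiS, ← ENNReal.ofReal_mul (Real.rpow_nonneg ht.le s), Real.rpow_add ht]

lemma phiS_neg (s : ℝ) {t : ℝ} (ht : 0 < t) : phiS (-s) t = (phiS s t)⁻¹ := by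
  rw [phiS, phiS, Real.rpow_neg ht.le, ENNReal.ofReal_inv_of_pos (Real.rpow_pos_of_pos ht s)]

lemma phiS_mul_phiS_neg (s : ℝ) {t : ℝ} (ht : 0 < t) : phiS s t * phiS (-s) t = 1 := by
  rw [← phiS_add s (-s) ht, add_neg_cancel, phiS_zero]

lemma phiS_rpow (s r : ℝ) {t : ℝ} (ht : 0 < t) : phiS s t ^ r = phiS (s * r) t := by
  rw [phiS, phiS, ENNReal.ofReal_rpow_of_pos (Real.rpow_pos_of_pos ht s), Real.rpow_mul ht.le]

lemma phiS_mul (s : ℝ) {t u : ℝ} (ht : 0 ≤ t) (hu : 0 ≤ u) :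
    phiS s (t * u) = phiS s t * phiS s u := by
  rw [phiS, phiS, phiS, ← ENNReal.ofReal_mul (Real.rpow_nonneg ht s), Real.mul_rpow ht hu]

lemma phiS_inv (s : ℝ) {t : ℝ} (ht : 0 < t) : phiS s t⁻¹ = phiS (-s) t := by
  rw [phiS, phiS, Real.inv_rpow ht.le, Real.rpow_neg ht.le]

lemma phiS_mono {s : ℝ} (hs : 0 ≤ s) {t u : ℝ} (ht : 0 ≤ t) (htu : t ≤ u) :
    phiS s t ≤ phiS s u :=
  ENNReal.ofReal_le_ofReal (Real.rpow_le_rpow ht htu hs)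

lemma phiS_anti {s : ℝ} (hs : s ≤ 0) {t u : ℝ} (ht : 0 < t) (htu : t ≤ u) :
    phiS s u ≤ phiS s t :=
  ENNReal.ofReal_le_ofReal (Real.rpow_le_rpow_of_nonpos ht htu hs)

@[fun_prop]
lemma measurable_phiS (s : ℝ) : Measurable (phiS s) := by
  unfold phiS
  fun_prop

lemma phiS_half_lt_one {s : ℝ} (hs : 0 < s) : phiS s (1 / 2) < 1 :=
  ENNReal.ofReal_lt_one.2 (Real.rpow_lt_one (by norm_num) (by norm_num) hs)

lemma tendsto_phiS_atTop {s : ℝ} (hs : 0 < s) :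
    Filter.Tendsto (phiS s) Filter.atTop (nhds ⊤) :=
  ENNReal.tendsto_ofReal_atTop.comp (tendsto_rpow_atTop hs)

lemma eq_zero_of_phiS_le {s : ℝ} {B : ℝ≥0∞} (hB : B ≠ ⊤) (h : ∀ t, 0 < t → phiS s t ≤ B) :
    s = 0 := by
  have not_pos : ∀ s', (∀ t, 0 < t → phiS s' t ≤ B) → ¬ 0 < s' := fun s' h' hs' =>
    hB (top_le_iff.1 (le_of_tendsto (tendsto_phiS_atTop hs')
      ((Filter.eventually_gt_atTop 0).mono h')))
  refine le_antisymm (not_lt.1 (not_pos s h)) (not_lt.1 fun hs => ?_)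
  refine not_pos (-s) (fun t ht => ?_) (neg_pos.2 hs)
  rw [← phiS_inv s ht]
  exact h t⁻¹ (inv_pos.2 ht)

lemma phiS_le_phiS_abs (s : ℝ) {u t : ℝ} (hu : 1 ≤ u) (hut : u⁻¹ ≤ t) (htu : t ≤ u) :
    phiS s t ≤ phiS |s| u := by
  have hu0 : 0 < u := one_pos.trans_le hu
  have ht : 0 < t := (inv_pos.2 hu0).trans_le hut
  obtain hs | hs := le_total 0 s
  · rw [abs_of_nonneg hs]
    exact phiS_mono hs ht.le htu
  · rw [abs_of_nonpos hs, ← phiS_inv s hu0]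
    exact phiS_anti hs (inv_pos.2 hu0) hut

lemma one_le_phiS_abs_mul_phiS (s : ℝ) {u t : ℝ} (hu : 1 ≤ u) (hut : u⁻¹ ≤ t) (htu : t ≤ u) :
    1 ≤ phiS |s| u * phiS s t := by
  have ht : 0 < t := (inv_pos.2 (one_pos.trans_le hu)).trans_le hut
  calc 1 = phiS (-s) t * phiS s t := by rw [mul_comm, phiS_mul_phiS_neg s ht]
    _ ≤ phiS |s| u * phiS s t := by
        gcongr
        rw [← abs_neg s]
        exact phiS_le_phiS_abs (-s) hu hut htu

lemma setLIntegral_Ioo_phiS {a : ℝ} (ha : 0 < a) {b : ℝ} (hb : 0 ≤ b) :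
    ∫⁻ s in Ioo 0 b, phiS (a - 1) s = (ENNReal.ofReal a)⁻¹ * ENNReal.ofReal b ^ a := by
  have h_integrable : IntegrableOn (fun s : ℝ => s ^ (a - 1)) (Ioo 0 b) :=
    (intervalIntegrable_iff_integrableOn_Ioo_of_le hb).1
      (intervalIntegral.intervalIntegrable_rpow' (by linarith))
  have h_integral : ∫ s in Ioo 0 b, s ^ (a - 1) = a⁻¹ * b ^ a := by
    rw [← integral_Ioc_eq_integral_Ioo, ← intervalIntegral.integral_of_le hb,
      integral_rpow (Or.inl (by linarith)), sub_add_cancel, Real.zero_rpow ha.ne', sub_zero,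
      div_eq_inv_mul]
  calc ∫⁻ s in Ioo 0 b, phiS (a - 1) s
      = ENNReal.ofReal (∫ s in Ioo 0 b, s ^ (a - 1)) :=
        (ofReal_integral_eq_lintegral_ofReal h_integrable
          ((ae_restrict_mem measurableSet_Ioo).mono fun s hs =>
            Real.rpow_nonneg hs.1.le _)).symm
    _ = (ENNReal.ofReal a)⁻¹ * ENNReal.ofReal b ^ a := by
        rw [h_integral, ENNReal.ofReal_mul (inv_nonneg.2 ha.le), ENNReal.ofReal_inv_of_pos ha,
          ENNReal.ofReal_rpow_of_nonneg hb ha.le]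

lemma setLIntegral_Ioi_phiS (s : ℝ) : ∫⁻ t in Ioi 0, phiS s t = ⊤ := by
  by_contra h
  refine not_integrableOn_Ioi_rpow s ⟨by fun_prop, ?_⟩
  refine (hasFiniteIntegral_iff_ofReal ?_).2 (lt_top_iff_ne_top.2 h)
  exact (ae_restrict_mem measurableSet_Ioi).mono fun t ht => Real.rpow_nonneg (le_of_lt ht) s

lemma setLIntegral_phiS_indicator_ofReal_lt {a : ℝ} (ha : 0 < a) (y : ℝ≥0∞) :
    ∫⁻ s in Ioi 0, {s | ENNReal.ofReal s < y}.indicator (phiS (a - 1)) s =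
      (ENNReal.ofReal a)⁻¹ * y ^ a := by
  rw [setLIntegral_indicator (measurableSet_lt ENNReal.measurable_ofReal measurable_const)]
  obtain rfl | hy := eq_or_ne y ⊤
  · have h_set : {s : ℝ | ENNReal.ofReal s < ⊤} ∩ Ioi 0 = Ioi 0 :=
      inter_eq_right.2 fun s _ => ENNReal.ofReal_lt_top
    rw [h_set, setLIntegral_Ioi_phiS, ENNReal.top_rpow_of_pos ha,
      ENNReal.mul_top (ENNReal.inv_ne_zero.2 ENNReal.ofReal_ne_top)]
  · have h_set : {s | ENNReal.ofReal s < y} ∩ Ioi 0 = Ioo 0 y.toReal := by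
      ext s
      simp only [mem_inter_iff, mem_ofPred_eq, mem_Ioi, mem_Ioo, and_comm (b := 0 < s)]
      exact and_congr_right fun hs => ENNReal.ofReal_lt_iff_lt_toReal hs.le hy
    rw [h_set, setLIntegral_Ioo_phiS ha ENNReal.toReal_nonneg, ENNReal.ofReal_toReal hy]

section LayerCake

variable {X : Type*} [MeasurableSpace X] {μ : Measure X}

lemma lintegral_rpow_eq_lintegral_phiS_mul_meas_lt [SFinite μ] {f : X → ℝ≥0∞}
    (hf : Measurable f) {p : ℝ} (hp : 0 < p) :
    ∫⁻ x, f x ^ p ∂μ =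
      ENNReal.ofReal p * ∫⁻ s in Ioi 0, phiS (p - 1) s * μ {x | ENNReal.ofReal s < f x} := by
  have hp_inv : ENNReal.ofReal p * (ENNReal.ofReal p)⁻¹ = 1 :=
    ENNReal.mul_inv_cancel (ENNReal.ofReal_pos.2 hp).ne' ENNReal.ofReal_ne_top
  have h_meas : Measurable fun z : X × ℝ =>
      {s | ENNReal.ofReal s < f z.1}.indicator (phiS (p - 1)) z.2 :=
    Measurable.indicator (s := {z : X × ℝ | ENNReal.ofReal z.2 < f z.1})
      ((measurable_phiS _).comp measurable_snd) (measurableSet_lt (by fun_prop) (by fun_prop))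
  calc ∫⁻ x, f x ^ p ∂μ
      = ∫⁻ x, (ENNReal.ofReal p * ∫⁻ s in Ioi 0,
          {s | ENNReal.ofReal s < f x}.indicator (phiS (p - 1)) s) ∂μ := by
        refine lintegral_congr fun x => ?_
        rw [setLIntegral_phiS_indicator_ofReal_lt hp, ← mul_assoc, hp_inv, one_mul]
    _ = ENNReal.ofReal p * ∫⁻ s in Ioi 0, ∫⁻ x,
          {s | ENNReal.ofReal s < f x}.indicator (phiS (p - 1)) s ∂μ := by
        rw [lintegral_const_mul' _ _ ENNReal.ofReal_ne_top,
          lintegral_lintegral_swap h_meas.aemeasurable]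
    _ = _ := by
        congr 1
        refine lintegral_congr fun s => ?_
        exact lintegral_indicator_const (s := {x | ENNReal.ofReal s < f x})
          (measurableSet_lt measurable_const hf) (phiS (p - 1) s)

lemma mul_mul_rpow_sub_one_eq (a b : ℝ≥0∞) {p : ℝ} (hp : 1 ≤ p) :
    a * (b * a) ^ (p - 1) = b ^ (p - 1) * a ^ p := by
  have hp_sub : 0 ≤ p - 1 := sub_nonneg.2 hp
  rw [ENNReal.mul_rpow_of_nonneg _ _ hp_sub, mul_left_comm]
  nth_rw 1 [← ENNReal.rpow_one a]
  rw [← ENNReal.rpow_add_of_nonneg _ _ zero_le_one hp_sub, add_sub_cancel]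

/- The integral of `g` over `{s < 2 g}` is the measure of that set for the density `g`, so the layer
cake formula for this measure turns the truncated weak type bound into `∫ (2 g) ^ (p - 1) g`. -/
lemma lintegral_rpow_le_of_truncated_weak_type [SFinite μ] {F g : X → ℝ≥0∞}
    (hF : Measurable F) (hg : Measurable g) {C : ℝ≥0∞} (hC : C ≠ ⊤)
    (h : ∀ s, 0 < s → μ {x | ENNReal.ofReal s < F x} ≤
      C * phiS (-1) s * ∫⁻ x in {x | ENNReal.ofReal s < 2 * g x}, g x ∂μ)
    {p : ℝ} (hp : 1 < p) :
    ∫⁻ x, F x ^ p ∂μ ≤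
      ENNReal.ofReal p * C * (ENNReal.ofReal (p - 1))⁻¹ * 2 ^ (p - 1) * ∫⁻ x, g x ^ p ∂μ := by
  have hp_sub : 0 < p - 1 := sub_pos.2 hp
  have hp_inv : (ENNReal.ofReal (p - 1))⁻¹ * ENNReal.ofReal (p - 1) = 1 :=
    ENNReal.inv_mul_cancel (ENNReal.ofReal_pos.2 hp_sub).ne' ENNReal.ofReal_ne_top
  have h_level (s : ℝ) : ∫⁻ x in {x | ENNReal.ofReal s < 2 * g x}, g x ∂μ =
      μ.withDensity g {x | ENNReal.ofReal s < 2 * g x} :=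
    (withDensity_apply _ (measurableSet_lt measurable_const (hg.const_mul 2))).symm
  calc ∫⁻ x, F x ^ p ∂μ
      = ENNReal.ofReal p * ∫⁻ s in Ioi 0, phiS (p - 1) s * μ {x | ENNReal.ofReal s < F x} :=
        lintegral_rpow_eq_lintegral_phiS_mul_meas_lt hF (one_pos.trans hp)
    _ ≤ ENNReal.ofReal p * ∫⁻ s in Ioi 0, C * (phiS (p - 1 - 1) s *
          μ.withDensity g {x | ENNReal.ofReal s < 2 * g x}) := by
        refine mul_le_mul_right (setLIntegral_mono' measurableSet_Ioi fun s hs => ?_) _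
        rw [sub_eq_add_neg (p - 1) 1, phiS_add _ _ hs, ← h_level]
        calc phiS (p - 1) s * μ {x | ENNReal.ofReal s < F x}
            ≤ phiS (p - 1) s * (C * phiS (-1) s *
                ∫⁻ x in {x | ENNReal.ofReal s < 2 * g x}, g x ∂μ) := by
              gcongr
              exact h s hs
          _ = _ := by ring
    _ = ENNReal.ofReal p * C * ((ENNReal.ofReal (p - 1))⁻¹ * (ENNReal.ofReal (p - 1) *
          ∫⁻ s in Ioi 0, phiS (p - 1 - 1) s *
            μ.withDensity g {x | ENNReal.ofReal s < 2 * g x})) := by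
        rw [lintegral_const_mul' _ _ hC, ← mul_assoc (ENNReal.ofReal (p - 1))⁻¹, hp_inv, one_mul,
          mul_assoc]
    _ = ENNReal.ofReal p * C * ((ENNReal.ofReal (p - 1))⁻¹ *
          ∫⁻ x, g x * (2 * g x) ^ (p - 1) ∂μ) := by
        rw [← lintegral_rpow_eq_lintegral_phiS_mul_meas_lt (hg.const_mul 2) hp_sub,
          lintegral_withDensity_eq_lintegral_mul _ hg ((hg.const_mul 2).pow_const _)]
        rfl
    _ = _ := by
        simp only [mul_mul_rpow_sub_one_eq _ _ hp.le]
        rw [lintegral_const_mul _ (hg.pow_const p)]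
        ring

lemma lintegral_le_lintegral_rpow_mul_measure_univ {f : X → ℝ≥0∞} (hf : AEMeasurable f μ)
    {p : ℝ} (hp : 1 < p) :
    ∫⁻ x, f x ∂μ ≤ (∫⁻ x, f x ^ p ∂μ) ^ (1 / p) * μ univ ^ (1 - 1 / p) := by
  have h_conj := Real.HolderConjugate.conjExponent hp
  have h_holder := ENNReal.lintegral_mul_le_Lp_mul_Lq μ h_conj hf
    (aemeasurable_const (b := (1 : ℝ≥0∞)))
  simpa only [Pi.mul_apply, mul_one, one_div, ENNReal.one_rpow, lintegral_const, one_mul,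
    h_conj.one_sub_inv] using h_holder

end LayerCake

section Vitali

variable {E : Type*} [NormedAddCommGroup E] [NormedSpace ℝ E] [FiniteDimensional ℝ E]
  [MeasurableSpace E] [BorelSpace E] (μ : Measure E) [μ.IsAddHaarMeasure]

lemma exists_forall_le_of_measure_ball_le [Nontrivial E] {N : ℝ≥0∞} (hN : N ≠ ⊤) :
    ∃ R : ℝ, ∀ (c : E) (r : ℝ), μ (ball c r) ≤ N → r ≤ R := by
  have hV_ne_zero : μ (ball (0 : E) 1) ≠ 0 := (measure_ball_pos μ 0 one_pos).ne'
  refine ⟨max 1 (N / μ (ball 0 1)).toReal, fun c r h => ?_⟩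
  obtain hr | hr := le_or_gt r 1
  · exact le_max_of_le_left hr
  have h_pow : ENNReal.ofReal (r ^ Module.finrank ℝ E) ≤ N / μ (ball 0 1) := by
    rw [ENNReal.le_div_iff_mul_le (Or.inl hV_ne_zero) (Or.inl measure_ball_lt_top.ne),
      ← Measure.addHaar_ball_of_pos μ c (one_pos.trans hr)]
    exact h
  exact le_max_of_le_right ((le_self_pow₀ hr.le Module.finrank_pos.ne').trans
    ((ENNReal.ofReal_le_iff_le_toReal (ENNReal.div_ne_top hN hV_ne_zero)).1 h_pow))

lemma measure_biUnion_ball_le_of_measure_ball_le [Nontrivial E] {ν : Measure E}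
    {t : Set (E × ℝ)} (ht : ∀ z ∈ t, 0 < z.2 ∧ μ (ball z.1 z.2) ≤ ν (ball z.1 z.2)) :
    μ (⋃ z ∈ t, ball z.1 z.2) ≤ 5 ^ Module.finrank ℝ E * ν univ := by
  obtain hν | hν := eq_or_ne (ν univ) ⊤
  · rw [hν, ENNReal.mul_top (pow_ne_zero _ (by norm_num))]
    exact le_top
  obtain ⟨R, hR⟩ := exists_forall_le_of_measure_ball_le μ hν
  obtain ⟨u, hut, h_disj, h_cover⟩ :=
    Vitali.exists_disjoint_subfamily_covering_enlargement_closedBall t Prod.fst Prod.snd R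
      (fun z hz => hR z.1 z.2 ((ht z hz).2.trans (measure_mono (subset_univ _)))) 5 (by norm_num)
  have hu_countable : u.Countable := h_disj.countable_of_nonempty_interior fun z hz =>
    ⟨z.1, ball_subset_interior_closedBall (mem_ball_self (ht z (hut hz)).1)⟩
  have h_sub : (⋃ z ∈ t, ball z.1 z.2) ⊆ ⋃ z ∈ u, closedBall z.1 (5 * z.2) :=
    iUnion₂_subset fun z hz => by
      obtain ⟨z', hz', h_sub⟩ := h_cover z hz
      exact ball_subset_closedBall.trans (h_sub.trans
        (subset_biUnion_of_mem (u := fun z : E × ℝ => closedBall z.1 (5 * z.2)) hz'))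
  calc μ (⋃ z ∈ t, ball z.1 z.2)
      ≤ ∑' z : u, μ (closedBall z.1.1 (5 * z.1.2)) :=
        (measure_mono h_sub).trans (measure_biUnion_le μ hu_countable _)
    _ ≤ ∑' z : u, 5 ^ Module.finrank ℝ E * ν (ball z.1.1 z.1.2) := by
        refine ENNReal.tsum_le_tsum fun z => ?_
        obtain ⟨hr, h_le⟩ := ht z (hut z.2)
        rw [Measure.addHaar_closedBall_mul μ _ (by norm_num) hr.le,
          ENNReal.ofReal_pow (by norm_num), ENNReal.ofReal_ofNat,
          Measure.addHaar_closedBall_eq_addHaar_ball,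
          ← Measure.addHaar_ball_center μ z.1.1 z.1.2]
        gcongr
    _ = 5 ^ Module.finrank ℝ E * ν (⋃ z ∈ u, ball z.1 z.2) := by
        rw [ENNReal.tsum_mul_left, measure_biUnion hu_countable
          (h_disj.mono fun z => ball_subset_closedBall) fun z _ => measurableSet_ball]
    _ ≤ 5 ^ Module.finrank ℝ E * ν univ := by
        gcongr
        exact subset_univ _

end Vitali

section FractionalMaximal

variable {n : ℕ} {α : ℝ} {g : Euc n → ℝ≥0∞} {x : Euc n}

lemma volume_ball_ne_zero (c : Euc n) {r : ℝ} (hr : 0 < r) : volume (ball c r) ≠ 0 :=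
  (measure_ball_pos volume c hr).ne'

lemma volume_ball_ne_top (c : Euc n) (r : ℝ) : volume (ball c r) ≠ ⊤ := measure_ball_lt_top.ne

lemma volume_ball_eq_phiS (c : Euc n) {r : ℝ} (hr : 0 < r) :
    volume (ball c r) = phiS n r * volume (ball (0 : Euc n) 1) := by
  rw [Measure.addHaar_ball_of_pos volume c hr, finrank_euclideanSpace_fin, phiS,
    Real.rpow_natCast]

lemma volume_ball_rpow (c : Euc n) {r : ℝ} (hr : 0 < r) (s : ℝ) :
    volume (ball c r) ^ s = phiS (n * s) r * volume (ball (0 : Euc n) 1) ^ s := by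
  rw [volume_ball_eq_phiS c hr,
    ENNReal.mul_rpow_of_ne_top (phiS_ne_top _ _) (volume_ball_ne_top _ _), phiS_rpow _ _ hr]

lemma lt_fracMax_iff {a : ℝ≥0∞} :
    a < fracMax n α g x ↔ ∃ (c : Euc n) (r : ℝ), 0 < r ∧ x ∈ ball c r ∧
      a < volume (ball c r) ^ (α / n - 1) * ∫⁻ y in ball c r, g y := by
  simp only [fracMax, lt_iSup_iff, exists_prop, and_assoc]

lemma le_fracMax {c : Euc n} {r : ℝ} (hr : 0 < r) (hx : x ∈ ball c r) :
    volume (ball c r) ^ (α / n - 1) * ∫⁻ y in ball c r, g y ≤ fracMax n α g x :=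
  le_iSup₂_of_le c r (le_iSup_of_le ⟨hr, hx⟩ le_rfl)

lemma fracMax_le {a : ℝ≥0∞} (h : ∀ (c : Euc n) (r : ℝ), 0 < r → x ∈ ball c r →
      volume (ball c r) ^ (α / n - 1) * ∫⁻ y in ball c r, g y ≤ a) :
    fracMax n α g x ≤ a :=
  iSup₂_le fun c r => iSup_le fun hr => h c r hr.1 hr.2

lemma measurable_fracMax (n : ℕ) (α : ℝ) (g : Euc n → ℝ≥0∞) : Measurable (fracMax n α g) := by
  refine measurable_of_Ioi fun a => IsOpen.measurableSet (isOpen_iff_mem_nhds.2 fun x hx => ?_)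
  obtain ⟨c, r, hr, hxc, h⟩ := lt_fracMax_iff.1 hx
  filter_upwards [isOpen_ball.mem_nhds hxc] with y hy
  exact lt_fracMax_iff.2 ⟨c, r, hr, hy, h⟩

lemma volume_lt_fracMax_zero_le (hn : 0 < n) {a : ℝ≥0∞} (ha : a ≠ 0) (ha_top : a ≠ ⊤) :
    volume {x | a < fracMax n 0 g x} ≤ 5 ^ n * (a⁻¹ * ∫⁻ y, g y) := by
  have : Nonempty (Fin n) := ⟨⟨0, hn⟩⟩
  let ν : Measure (Euc n) := a⁻¹ • volume.withDensity g
  let t : Set (Euc n × ℝ) := {z | 0 < z.2 ∧ volume (ball z.1 z.2) ≤ ν (ball z.1 z.2)}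
  have h_cover : {x | a < fracMax n 0 g x} ⊆ ⋃ z ∈ t, ball z.1 z.2 := fun x hx => by
    obtain ⟨c, r, hr, hxc, h⟩ := lt_fracMax_iff.1 hx
    rw [zero_div, zero_sub, ENNReal.rpow_neg_one, mul_comm, ← div_eq_mul_inv,
      ENNReal.lt_div_iff_mul_lt (Or.inl (volume_ball_ne_zero c hr))
        (Or.inl (volume_ball_ne_top c r))] at h
    have h_ball : volume (ball c r) ≤ a⁻¹ * ∫⁻ y in ball c r, g y := by
      rw [← ENNReal.div_eq_inv_mul, ENNReal.le_div_iff_mul_le (Or.inl ha) (Or.inl ha_top),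
        mul_comm]
      exact h.le
    refine mem_biUnion (x := (c, r)) ⟨hr, ?_⟩ hxc
    rwa [Measure.smul_apply, smul_eq_mul, withDensity_apply']
  calc volume {x | a < fracMax n 0 g x}
      ≤ volume (⋃ z ∈ t, ball z.1 z.2) := measure_mono h_cover
    _ ≤ 5 ^ Module.finrank ℝ (Euc n) * ν univ :=
        measure_biUnion_ball_le_of_measure_ball_le volume fun z hz => hz
    _ = 5 ^ n * (a⁻¹ * ∫⁻ y, g y) := by
        rw [finrank_euclideanSpace_fin, Measure.smul_apply, smul_eq_mul, withDensity_apply',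
          setLIntegral_univ]

lemma fracMax_zero_le_fracMax_indicator_add (g : Euc n → ℝ≥0∞) (a : ℝ≥0∞) (x : Euc n) :
    fracMax n 0 g x ≤ fracMax n 0 ({y | a < g y}.indicator g) x + a := by
  refine fracMax_le fun c r hr hxc => ?_
  have h_split (y : Euc n) : g y ≤ {y | a < g y}.indicator g y + a := by
    by_cases hy : a < g y
    · exact le_add_right (indicator_of_mem (s := {y | a < g y}) hy g).ge
    · exact le_add_left (not_lt.1 hy)
  have h_const : volume (ball c r) ^ ((0 : ℝ) / n - 1) * (a * volume (ball c r)) = a := by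
    rw [zero_div, zero_sub, ENNReal.rpow_neg_one, mul_left_comm,
      ENNReal.inv_mul_cancel (volume_ball_ne_zero c hr) (volume_ball_ne_top c r), mul_one]
  calc volume (ball c r) ^ ((0 : ℝ) / n - 1) * ∫⁻ y in ball c r, g y
      ≤ volume (ball c r) ^ ((0 : ℝ) / n - 1) *
          ∫⁻ y in ball c r, ({y | a < g y}.indicator g y + a) :=
        mul_le_mul_right (lintegral_mono h_split) _
    _ = volume (ball c r) ^ ((0 : ℝ) / n - 1) * (∫⁻ y in ball c r, {y | a < g y}.indicator g y)
          + a := by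
        rw [lintegral_add_right _ measurable_const, setLIntegral_const, mul_add, h_const]
    _ ≤ fracMax n 0 ({y | a < g y}.indicator g) x + a := add_le_add_left (le_fracMax hr hxc) a

lemma volume_ofReal_lt_fracMax_zero_le (hn : 0 < n) (hg : Measurable g) {s : ℝ} (hs : 0 < s) :
    volume {x | ENNReal.ofReal s < fracMax n 0 g x} ≤
      5 ^ n * 2 * phiS (-1) s * ∫⁻ x in {x | ENNReal.ofReal s < 2 * g x}, g x := by
  set a := ENNReal.ofReal s / 2 with ha_def
  have ha : a ≠ 0 := (ENNReal.half_pos (ENNReal.ofReal_pos.2 hs).ne').ne'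
  have ha_top : a ≠ ⊤ := ENNReal.div_ne_top ENNReal.ofReal_ne_top two_ne_zero
  have ha_inv : a⁻¹ = 2 * phiS (-1) s := by
    rw [ha_def, ENNReal.inv_div (Or.inl ENNReal.ofNat_ne_top) (Or.inl two_ne_zero),
      phiS_neg 1 hs, phiS, Real.rpow_one, div_eq_mul_inv]
  have h_set : {x | a < g x} = {x | ENNReal.ofReal s < 2 * g x} := by
    ext x
    simp only [mem_ofPred_eq]
    rw [ENNReal.div_lt_iff (Or.inl two_ne_zero) (Or.inl ENNReal.ofNat_ne_top), mul_comm]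
  have h_sub : {x | ENNReal.ofReal s < fracMax n 0 g x} ⊆
      {x | a < fracMax n 0 ({y | a < g y}.indicator g) x} := fun x hx => by
    have h := lt_of_lt_of_le hx (fracMax_zero_le_fracMax_indicator_add g a x)
    rw [← ENNReal.add_halves (ENNReal.ofReal s)] at h
    exact lt_of_add_lt_add_right h
  calc volume {x | ENNReal.ofReal s < fracMax n 0 g x}
      ≤ 5 ^ n * (a⁻¹ * ∫⁻ y, {y | a < g y}.indicator g y) :=
        (measure_mono h_sub).trans (volume_lt_fracMax_zero_le hn ha ha_top)
    _ = 5 ^ n * 2 * phiS (-1) s * ∫⁻ x in {x | ENNReal.ofReal s < 2 * g x}, g x := by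
        rw [lintegral_indicator (measurableSet_lt measurable_const hg), ha_inv, h_set]
        ring

lemma exists_lintegral_fracMax_zero_rpow_le (hn : 0 < n) {p : ℝ} (hp : 1 < p) :
    ∃ C : ℝ≥0∞, C ≠ ⊤ ∧ ∀ g : Euc n → ℝ≥0∞, Measurable g →
      ∫⁻ x, fracMax n 0 g x ^ p ≤ C * ∫⁻ x, g x ^ p := by
  have h_pow : (2 : ℝ≥0∞) ^ (p - 1) ≠ ⊤ :=
    ENNReal.rpow_ne_top_of_nonneg (sub_nonneg.2 hp.le) ENNReal.ofNat_ne_top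
  have h_inv : (ENNReal.ofReal (p - 1))⁻¹ ≠ ⊤ :=
    ENNReal.inv_ne_top.2 (ENNReal.ofReal_pos.2 (sub_pos.2 hp)).ne'
  exact ⟨_, by finiteness, fun g hg => lintegral_rpow_le_of_truncated_weak_type
    (C := 5 ^ n * 2) (measurable_fracMax n 0 g) hg (by finiteness)
    (fun s hs => volume_ofReal_lt_fracMax_zero_le hn hg hs) hp⟩

variable {γ p q : ℝ}

/- Hedberg's interpolation: of the average over a ball, the power `p / q` is bounded by the maximal
function and the remaining power `p * (γ / n)` by Hölder's inequality. -/
lemma fracMax_le_fracMax_zero_rpow_mul (hγ : 0 ≤ γ) (hp : 1 < p) (hq : 0 < q)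
    (hpq : 1 / p - 1 / q = γ / n) (hg : Measurable g) (x : Euc n) :
    fracMax n γ g x ≤ fracMax n 0 g x ^ (p / q) * (∫⁻ y, g y ^ p) ^ (γ / n) := by
  have hp0 : 0 < p := one_pos.trans hp
  have h_exp : p / q + p * (γ / n) = 1 := by rw [← hpq]; field_simp; ring
  refine fracMax_le fun c r hr hxc => ?_
  have h_avg := le_fracMax (α := 0) (g := g) hr hxc
  rw [zero_div, zero_sub] at h_avg
  set v := volume (ball c r)
  set I := ∫⁻ y in ball c r, g y
  have h_holder : I ≤ (∫⁻ y, g y ^ p) ^ (1 / p) * v ^ (1 - 1 / p) := by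
    refine (lintegral_le_lintegral_rpow_mul_measure_univ hg.aemeasurable hp).trans ?_
    rw [Measure.restrict_apply_univ]
    gcongr
    exact Measure.restrict_le_self
  have hI : I = I ^ (p / q) * I ^ (p * (γ / n)) := by
    rw [← ENNReal.rpow_add_of_nonneg _ _ (by positivity) (by positivity), h_exp, ENNReal.rpow_one]
  have hv : v ^ (γ / n - 1) * v ^ ((1 - 1 / p) * (p * (γ / n))) = v ^ (-1 * (p / q)) := by
    rw [← ENNReal.rpow_add _ _ (volume_ball_ne_zero c hr) (volume_ball_ne_top c r)]
    congr 1
    linear_combination (by field_simp : (1 - 1 / p) * (p * (γ / n)) = p * (γ / n) - γ / n) + h_exp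
  calc v ^ (γ / n - 1) * I = v ^ (γ / n - 1) * (I ^ (p / q) * I ^ (p * (γ / n))) := by rw [← hI]
    _ ≤ v ^ (γ / n - 1) * (I ^ (p / q) *
          ((∫⁻ y, g y ^ p) ^ (1 / p) * v ^ (1 - 1 / p)) ^ (p * (γ / n))) := by gcongr
    _ = (v ^ (γ / n - 1) * v ^ ((1 - 1 / p) * (p * (γ / n)))) *
          (I ^ (p / q) * (∫⁻ y, g y ^ p) ^ (γ / n)) := by
        rw [ENNReal.mul_rpow_of_nonneg _ _ (by positivity), ← ENNReal.rpow_mul,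
          ← ENNReal.rpow_mul v, ← mul_assoc (1 / p), one_div_mul_cancel hp0.ne', one_mul]
        ring
    _ = (v ^ (-1 : ℝ) * I) ^ (p / q) * (∫⁻ y, g y ^ p) ^ (γ / n) := by
        rw [hv, ENNReal.mul_rpow_of_nonneg _ _ (by positivity), ENNReal.rpow_mul, mul_assoc]
    _ ≤ fracMax n 0 g x ^ (p / q) * (∫⁻ y, g y ^ p) ^ (γ / n) := by gcongr

lemma exists_lintegral_fracMax_rpow_le (hn : 0 < n) (hγ : 0 ≤ γ) (hp : 1 < p) (hq : 0 < q)
    (hpq : 1 / p - 1 / q = γ / n) :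
    ∃ C : ℝ≥0∞, C ≠ ⊤ ∧ ∀ g : Euc n → ℝ≥0∞, Measurable g →
      ∫⁻ x, fracMax n γ g x ^ q ≤ C * (∫⁻ x, g x ^ p) ^ (q / p) := by
  obtain ⟨C, hC, h_max⟩ := exists_lintegral_fracMax_zero_rpow_le hn hp
  refine ⟨C, hC, fun g hg => ?_⟩
  have h_exp : 1 + γ / n * q = q / p := by
    rw [← hpq, sub_mul, one_div_mul_cancel hq.ne', one_div_mul_eq_div, add_sub_cancel]
  calc ∫⁻ x, fracMax n γ g x ^ q
      ≤ ∫⁻ x, fracMax n 0 g x ^ p * (∫⁻ y, g y ^ p) ^ (γ / n * q) := by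
        refine lintegral_mono fun x => ?_
        refine (ENNReal.rpow_le_rpow
          (fracMax_le_fracMax_zero_rpow_mul hγ hp hq hpq hg x) hq.le).trans_eq ?_
        rw [ENNReal.mul_rpow_of_nonneg _ _ hq.le, ← ENNReal.rpow_mul, ← ENNReal.rpow_mul,
          div_mul_cancel₀ _ hq.ne']
    _ = (∫⁻ x, fracMax n 0 g x ^ p) * (∫⁻ y, g y ^ p) ^ (γ / n * q) :=
        lintegral_mul_const _ ((measurable_fracMax n 0 g).pow_const p)
    _ ≤ C * (∫⁻ x, g x ^ p) * (∫⁻ y, g y ^ p) ^ (γ / n * q) := by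
        gcongr
        exact h_max g hg
    _ = C * (∫⁻ x, g x ^ p) ^ (q / p) := by
        rw [mul_assoc, ← h_exp,
          ENNReal.rpow_add_of_nonneg _ _ zero_le_one (by positivity), ENNReal.rpow_one]

end FractionalMaximal

/-- The annulus `r ≤ ‖x‖ < R` of `ℝⁿ`. The dyadic shells `annulus n (t / 2) t` are the pieces on
which power weights are comparable to constants. -/
def annulus (n : ℕ) (r R : ℝ) : Set (Euc n) := ball 0 R \ ball 0 r

section Dilation

variable {n : ℕ}

lemma mem_annulus {r R : ℝ} {x : Euc n} : x ∈ annulus n r R ↔ r ≤ ‖x‖ ∧ ‖x‖ < R := by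
  rw [annulus, mem_sdiff, mem_ball_zero_iff, mem_ball_zero_iff, not_lt, and_comm]

lemma annulus_subset_ball (n : ℕ) (r R : ℝ) : annulus n r R ⊆ ball 0 R := sdiff_subset

lemma measurableSet_annulus (n : ℕ) (r R : ℝ) : MeasurableSet (annulus n r R) :=
  measurableSet_ball.diff measurableSet_ball

lemma phiS_norm_smul (s : ℝ) {t : ℝ} (ht : 0 < t) (x : Euc n) :
    phiS s ‖t • x‖ = phiS s t * phiS s ‖x‖ := by
  rw [norm_smul, Real.norm_of_nonneg ht.le, phiS_mul s ht.le (norm_nonneg x)]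

lemma setLIntegral_preimage_smul (f : Euc n → ℝ≥0∞) (S : Set (Euc n)) {t : ℝ} (ht : 0 < t) :
    ∫⁻ x in (t • ·) ⁻¹' S, f (t • x) = phiS (-n) t * ∫⁻ x in S, f x := by
  have h_emb : MeasurableEmbedding fun x : Euc n => t • x :=
    (Homeomorph.smulOfNeZero t ht.ne').measurableEmbedding
  have h_map : Measure.map (fun x : Euc n => t • x) volume = phiS (-n) t • volume := by
    have h_scale : ENNReal.ofReal |(t ^ n)⁻¹| = phiS (-n) t := by
      rw [abs_of_pos (inv_pos.2 (pow_pos ht n)), phiS, Real.rpow_neg ht.le, Real.rpow_natCast]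
    rw [Measure.map_addHaar_smul volume ht.ne', finrank_euclideanSpace_fin, h_scale]
  rw [← h_emb.lintegral_map f, ← h_emb.restrict_map, h_map, Measure.restrict_smul,
    lintegral_smul_measure, smul_eq_mul]

lemma setLIntegral_ball_comp_smul (f : Euc n → ℝ≥0∞) (c : Euc n) (r : ℝ) {t : ℝ} (ht : 0 < t) :
    ∫⁻ x in ball c r, f (t • x) = phiS (-n) t * ∫⁻ x in ball (t • c) (t * r), f x := by
  rw [← setLIntegral_preimage_smul f _ ht]
  congr 2
  ext x
  rw [mem_preimage, mem_ball, mem_ball, dist_smul₀, Real.norm_of_nonneg ht.le,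
    mul_lt_mul_iff_right₀ ht]

lemma setLIntegral_ball_zero_comp_smul (f : Euc n → ℝ≥0∞) (r : ℝ) {t : ℝ} (ht : 0 < t) :
    ∫⁻ x in ball 0 r, f (t • x) = phiS (-n) t * ∫⁻ x in ball 0 (t * r), f x := by
  rw [setLIntegral_ball_comp_smul f 0 r ht, smul_zero]

lemma setLIntegral_annulus_comp_smul (f : Euc n → ℝ≥0∞) {t : ℝ} (ht : 0 < t) :
    ∫⁻ x in annulus n (1 / 2) 1, f (t • x) = phiS (-n) t * ∫⁻ x in annulus n (t / 2) t, f x := by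
  rw [← setLIntegral_preimage_smul f _ ht]
  congr 2
  ext x
  rw [mem_preimage, mem_annulus, mem_annulus, norm_smul, Real.norm_of_nonneg ht.le,
    div_eq_mul_one_div t, mul_le_mul_iff_right₀ ht, mul_lt_iff_lt_one_right ht]

lemma fracMax_comp_smul_le (hn : 0 < n) (α : ℝ) (g : Euc n → ℝ≥0∞) {t : ℝ} (ht : 0 < t)
    (x : Euc n) :
    fracMax n α (fun y => g (t • y)) x ≤ phiS (-α) t * fracMax n α g (t • x) := by
  have hn0 : (n : ℝ) ≠ 0 := Nat.cast_ne_zero.2 hn.ne'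
  refine fracMax_le fun c r hr hxc => ?_
  have h_mem : t • x ∈ ball (t • c) (t * r) := by
    rw [mem_ball, dist_smul₀, Real.norm_of_nonneg ht.le]
    exact mul_lt_mul_of_pos_left hxc ht
  have h_exp : (-n : ℝ) = -α + n * (α / n - 1) := by field_simp; ring
  calc volume (ball c r) ^ (α / n - 1) * ∫⁻ y in ball c r, g (t • y)
      = phiS (-α) t * (volume (ball (t • c) (t * r)) ^ (α / n - 1) *
          ∫⁻ y in ball (t • c) (t * r), g y) := by
        rw [setLIntegral_ball_comp_smul g c r ht, volume_ball_rpow c hr,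
          volume_ball_rpow _ (mul_pos ht hr), phiS_mul _ ht.le hr.le, h_exp, phiS_add _ _ ht]
        ring
    _ ≤ phiS (-α) t * fracMax n α g (t • x) := by
        gcongr
        exact le_fracMax (mul_pos ht hr) h_mem

lemma fracMax_comp_smul (hn : 0 < n) (α : ℝ) (g : Euc n → ℝ≥0∞) {t : ℝ} (ht : 0 < t)
    (x : Euc n) :
    fracMax n α (fun y => g (t • y)) x = phiS (-α) t * fracMax n α g (t • x) := by
  refine le_antisymm (fracMax_comp_smul_le hn α g ht x) ?_
  have h_inv := fracMax_comp_smul_le hn α (fun y => g (t • y)) (inv_pos.2 ht) (t • x)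
  simp only [smul_inv_smul₀ ht.ne', inv_smul_smul₀ ht.ne'] at h_inv
  calc phiS (-α) t * fracMax n α g (t • x)
      ≤ phiS (-α) t * (phiS (-α) t⁻¹ * fracMax n α (fun y => g (t • y)) x) := by gcongr
    _ = fracMax n α (fun y => g (t • y)) x := by
        rw [← mul_assoc, phiS_inv _ ht, phiS_mul_phiS_neg _ ht, one_mul]

lemma powW_smul (β s : ℝ) {t : ℝ} (ht : 0 < t) (x : Euc n) :
    powW n β s (t • x) = phiS (β * s) t * powW n β s x :=
  phiS_norm_smul (β * s) ht x

lemma lmNormE_comp_smul {p : ℝ} (hp : 0 < p) (lam β : ℝ) (g : Euc n → ℝ≥0∞) {t : ℝ}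
    (ht : 0 < t) :
    lmNormE n p (phiS lam) (powW n β p) (fun x => g (t • x)) =
      phiS (-(β + (n - lam) / p)) t * lmNormE n p (phiS lam) (powW n β p) g := by
  have h_point (x : Euc n) : g (t • x) ^ p * powW n β p x =
      phiS (-(β * p)) t * (g (t • x) ^ p * powW n β p (t • x)) := by
    rw [powW_smul β p ht, mul_left_comm, ← mul_assoc (phiS _ t), mul_comm (phiS _ t) (phiS _ t),
      phiS_mul_phiS_neg _ ht, one_mul]
  have h_integral (R : ℝ) : ∫⁻ x in ball 0 R, g (t • x) ^ p * powW n β p x =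
      phiS (-(β * p) + -n) t * ∫⁻ x in ball 0 (t * R), g x ^ p * powW n β p x := by
    rw [lintegral_congr h_point, lintegral_const_mul' _ _ (phiS_ne_top _ _),
      setLIntegral_ball_zero_comp_smul (fun x => g x ^ p * powW n β p x) R ht, phiS_add _ _ ht,
      mul_assoc]
  have h_phi {R : ℝ} (hR : 0 < R) : (phiS lam R)⁻¹ = phiS lam t * (phiS lam (t * R))⁻¹ := by
    rw [← phiS_neg _ hR, ← phiS_neg _ (mul_pos ht hR), phiS_mul _ ht.le hR.le, ← mul_assoc,
      phiS_mul_phiS_neg _ ht, one_mul]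
  have h_exp : (lam + (-(β * p) + -n)) * (1 / p) = -(β + (n - lam) / p) := by field_simp; ring
  simp only [lmNormE, ENNReal.mul_iSup]
  refine (mul_left_surjective₀ ht.ne').iSup_congr _ fun R => ?_
  refine iSup_congr_Prop (mul_pos_iff_of_pos_left ht) fun hR => ?_
  rw [h_integral, h_phi hR, ← h_exp, ← phiS_rpow _ _ ht, phiS_add _ _ ht,
    ← ENNReal.mul_rpow_of_nonneg _ _ (one_div_nonneg.2 hp.le)]
  congr 1
  ring

end Dilation

section Shells

variable {n : ℕ}

lemma ball_sdiff_zero_eq_iUnion_annulus {R : ℝ} (hR : 0 < R) :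
    ball (0 : Euc n) R \ {0} = ⋃ k : ℕ, annulus n (R / 2 ^ k / 2) (R / 2 ^ k) := by
  ext x
  simp only [mem_sdiff, mem_ball_zero_iff, mem_singleton_iff, mem_iUnion, mem_annulus]
  constructor
  · rintro ⟨hxR, hx⟩
    have h_norm : 0 < ‖x‖ := norm_pos_iff.2 hx
    have h_exists : ∃ k : ℕ, R / 2 ^ k / 2 ≤ ‖x‖ := by
      obtain ⟨k, hk⟩ := pow_unbounded_of_one_lt (R / ‖x‖) (one_lt_two (α := ℝ))
      exact ⟨k, (half_le_self (by positivity)).trans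
        ((div_lt_comm₀ h_norm (by positivity)).1 hk).le⟩
    classical
    refine ⟨Nat.find h_exists, Nat.find_spec h_exists, ?_⟩
    rcases h : Nat.find h_exists with _ | k
    · rwa [pow_zero, div_one]
    · rw [pow_succ, ← div_div]
      exact not_le.1 (Nat.find_min h_exists (by omega))
  · rintro ⟨k, h_le, h_lt⟩
    have h_pos : 0 < R / 2 ^ k / 2 := by positivity
    exact ⟨h_lt.trans_le (div_le_self hR.le (one_le_pow₀ one_le_two)),
      norm_pos_iff.1 (h_pos.trans_le h_le)⟩

lemma pairwise_disjoint_annulus {R : ℝ} (hR : 0 < R) :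
    Pairwise fun i j : ℕ =>
      Disjoint (annulus n (R / 2 ^ i / 2) (R / 2 ^ i)) (annulus n (R / 2 ^ j / 2) (R / 2 ^ j)) := by
  refine (pairwise_disjoint_on _).2 fun i j hij => Set.disjoint_left.2 fun x hi hj => ?_
  have h_le : R / 2 ^ j ≤ R / 2 ^ i / 2 := by
    rw [div_div, ← pow_succ]
    exact div_le_div_of_nonneg_left hR.le (by positivity) (pow_le_pow_right₀ one_le_two hij)
  exact ((mem_annulus.1 hj).2.trans_le h_le).not_ge (mem_annulus.1 hi).1

lemma setLIntegral_ball_eq_tsum_annulus (hn : 0 < n) (g : Euc n → ℝ≥0∞) {R : ℝ} (hR : 0 < R) :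
    ∫⁻ x in ball 0 R, g x = ∑' k : ℕ, ∫⁻ x in annulus n (R / 2 ^ k / 2) (R / 2 ^ k), g x := by
  have : Nonempty (Fin n) := ⟨⟨0, hn⟩⟩
  rw [← lintegral_iUnion (fun k => measurableSet_annulus n _ _) (pairwise_disjoint_annulus hR),
    ← ball_sdiff_zero_eq_iUnion_annulus hR]
  exact setLIntegral_congr (sdiff_null_ae_eq_self (measure_singleton 0)).symm

lemma phiS_div_two_pow (s : ℝ) {R : ℝ} (hR : 0 ≤ R) (k : ℕ) :
    phiS s (R / 2 ^ k) = phiS s (1 / 2) ^ k * phiS s R := by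
  rw [div_eq_mul_one_div, ← one_div_pow, phiS_mul s hR (by positivity), mul_comm]
  congr 1
  rw [phiS, phiS, ← ENNReal.ofReal_pow (by positivity), ← Real.rpow_natCast, ← Real.rpow_natCast,
    ← Real.rpow_mul (by positivity), ← Real.rpow_mul (by positivity), mul_comm]

lemma tsum_phiS_div_two_pow (s : ℝ) {R : ℝ} (hR : 0 ≤ R) :
    ∑' k : ℕ, phiS s (R / 2 ^ k) = (1 - phiS s (1 / 2))⁻¹ * phiS s R := by
  simp only [phiS_div_two_pow s hR]
  rw [ENNReal.tsum_mul_right, ENNReal.tsum_geometric]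

lemma inv_one_sub_phiS_half_ne_top {s : ℝ} (hs : 0 < s) : (1 - phiS s (1 / 2))⁻¹ ≠ ⊤ :=
  ENNReal.inv_ne_top.2 (tsub_pos_of_lt (phiS_half_lt_one hs)).ne'

lemma tsum_phiS_div_two_pow_eq_top {s : ℝ} (hs : s ≤ 0) {R : ℝ} (hR : 0 < R) :
    ∑' k : ℕ, phiS s (R / 2 ^ k) = ⊤ := by
  rw [eq_top_iff, ← ENNReal.tsum_const_eq_top_of_ne_zero (α := ℕ) (phiS_ne_zero s hR)]
  exact ENNReal.tsum_le_tsum fun k =>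
    phiS_anti hs (by positivity) (div_le_self hR.le (one_le_pow₀ one_le_two))

lemma setLIntegral_ball_le_of_annulus (hn : 0 < n) {s : ℝ} {D : ℝ≥0∞} {g : Euc n → ℝ≥0∞}
    (h : ∀ t, 0 < t → ∫⁻ x in annulus n (t / 2) t, g x ≤ D * phiS s t) {R : ℝ} (hR : 0 < R) :
    ∫⁻ x in ball 0 R, g x ≤ D * (1 - phiS s (1 / 2))⁻¹ * phiS s R := by
  rw [setLIntegral_ball_eq_tsum_annulus hn g hR, mul_assoc, ← tsum_phiS_div_two_pow s hR.le,
    ← ENNReal.tsum_mul_left]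
  exact ENNReal.tsum_le_tsum fun k => h _ (by positivity)

lemma setLIntegral_annulus_phiS_norm (s : ℝ) {t : ℝ} (ht : 0 < t) :
    ∫⁻ x in annulus n (t / 2) t, phiS s ‖x‖ =
      phiS (s + n) t * ∫⁻ x in annulus n (1 / 2) 1, phiS s ‖x‖ := by
  have h_dilate := setLIntegral_annulus_comp_smul (fun x : Euc n => phiS s ‖x‖) ht
  simp only [phiS_norm_smul s ht] at h_dilate
  rw [lintegral_const_mul' _ _ (phiS_ne_top s t)] at h_dilate
  rw [phiS_add _ _ ht, mul_assoc, mul_left_comm, h_dilate, ← mul_assoc, phiS_mul_phiS_neg _ ht,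
    one_mul]

lemma volume_annulus_ne_top (r R : ℝ) : volume (annulus n r R) ≠ ⊤ :=
  ((measure_mono (annulus_subset_ball n r R)).trans_lt measure_ball_lt_top).ne

lemma volume_annulus_ne_zero (hn : 0 < n) : volume (annulus n (1 / 2) 1) ≠ 0 := by
  intro h_zero
  have h_shell (t : ℝ) (ht : 0 < t) : ∫⁻ _ in annulus n (t / 2) t, 1 = (0 : ℝ≥0∞) := by
    have h := setLIntegral_annulus_phiS_norm (n := n) 0 ht
    simpa only [phiS_zero, setLIntegral_one, h_zero, mul_zero] using h
  have h_ball := setLIntegral_ball_eq_tsum_annulus hn (fun _ => 1) one_pos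
  rw [setLIntegral_one, ENNReal.tsum_eq_zero.2 fun k => h_shell _ (by positivity)] at h_ball
  exact volume_ball_ne_zero 0 one_pos h_ball

lemma setLIntegral_annulus_ne_zero (hn : 0 < n) {g : Euc n → ℝ≥0∞} (hg : Measurable g)
    (hg0 : ∀ x ∈ annulus n (1 / 2) 1, g x ≠ 0) : ∫⁻ x in annulus n (1 / 2) 1, g x ≠ 0 := by
  refine ((setLIntegral_pos_iff hg).2 ?_).ne'
  rw [inter_eq_right.2 (show annulus n (1 / 2) 1 ⊆ Function.support g from hg0)]
  exact pos_iff_ne_zero.2 (volume_annulus_ne_zero hn)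

lemma phiS_norm_ne_zero_of_mem_annulus (s : ℝ) {x : Euc n} (hx : x ∈ annulus n (1 / 2) 1) :
    phiS s ‖x‖ ≠ 0 :=
  phiS_ne_zero s (one_half_pos.trans_le (mem_annulus.1 hx).1)

lemma setLIntegral_annulus_phiS_norm_ne_zero (hn : 0 < n) (s : ℝ) :
    ∫⁻ x in annulus n (1 / 2) 1, phiS s ‖x‖ ≠ 0 :=
  setLIntegral_annulus_ne_zero hn (by fun_prop) fun _ => phiS_norm_ne_zero_of_mem_annulus s

lemma setLIntegral_ball_phiS_norm_eq_top (hn : 0 < n) {s : ℝ} (hs : s + n ≤ 0) {R : ℝ}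
    (hR : 0 < R) : ∫⁻ x in ball (0 : Euc n) R, phiS s ‖x‖ = ⊤ := by
  have h_one := setLIntegral_annulus_phiS_norm_ne_zero hn s
  calc ∫⁻ x in ball (0 : Euc n) R, phiS s ‖x‖
      = ∑' k : ℕ, phiS (s + n) (R / 2 ^ k) * ∫⁻ x in annulus n (1 / 2) 1, phiS s ‖x‖ := by
        rw [setLIntegral_ball_eq_tsum_annulus hn _ hR]
        exact tsum_congr fun k => setLIntegral_annulus_phiS_norm s (by positivity)
    _ = ⊤ := by
        rw [ENNReal.tsum_mul_right, tsum_phiS_div_two_pow_eq_top hs hR, ENNReal.top_mul h_one]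

lemma phiS_norm_le_of_mem_annulus (s : ℝ) {x : Euc n} (hx : x ∈ annulus n (1 / 4) 2) :
    phiS s ‖x‖ ≤ phiS |s| 4 :=
  phiS_le_phiS_abs s (by norm_num) (by linarith [(mem_annulus.1 hx).1])
    (by linarith [(mem_annulus.1 hx).2])

lemma one_le_phiS_abs_mul_phiS_norm_of_mem_annulus (s : ℝ) {x : Euc n}
    (hx : x ∈ annulus n (1 / 4) 2) : 1 ≤ phiS |s| 4 * phiS s ‖x‖ :=
  one_le_phiS_abs_mul_phiS s (by norm_num) (by linarith [(mem_annulus.1 hx).1])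
    (by linarith [(mem_annulus.1 hx).2])

lemma annulus_half_one_subset : annulus n (1 / 2) 1 ⊆ annulus n (1 / 4) 2 := fun x hx =>
  mem_annulus.2 ⟨by linarith [(mem_annulus.1 hx).1], by linarith [(mem_annulus.1 hx).2]⟩

end Shells

section LocalMorrey

variable {n : ℕ} {p : ℝ}

lemma setLIntegral_ball_le_lmNormE (hp : 0 < p) (lam : ℝ) (w g : Euc n → ℝ≥0∞) {R : ℝ}
    (hR : 0 < R) :
    ∫⁻ x in ball 0 R, g x ^ p * w x ≤ phiS lam R * lmNormE n p (phiS lam) w g ^ p := by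
  have h_le : ((phiS lam R)⁻¹ * ∫⁻ x in ball 0 R, g x ^ p * w x) ^ p⁻¹ ≤
      lmNormE n p (phiS lam) w g := by
    rw [← one_div p]
    exact le_iSup₂_of_le R hR le_rfl
  rw [ENNReal.rpow_inv_le_iff hp] at h_le
  rwa [← ENNReal.inv_mul_le_iff (phiS_ne_zero lam hR) (phiS_ne_top lam R)]

lemma lmNormE_le_of_setLIntegral_ball_le (hp : 0 < p) {lam : ℝ} {w g : Euc n → ℝ≥0∞} {B : ℝ≥0∞}
    (h : ∀ R, 0 < R → ∫⁻ x in ball 0 R, g x ^ p * w x ≤ phiS lam R * B ^ p) :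
    lmNormE n p (phiS lam) w g ≤ B := by
  refine iSup₂_le fun R hR => ?_
  rw [one_div, ENNReal.rpow_inv_le_iff hp,
    ENNReal.inv_mul_le_iff (phiS_ne_zero lam hR) (phiS_ne_top lam R)]
  exact h R hR

lemma lmNormE_mono (hp : 0 ≤ p) (φ : ℝ → ℝ≥0∞) (w : Euc n → ℝ≥0∞) {g h : Euc n → ℝ≥0∞}
    (hgh : g ≤ h) : lmNormE n p φ w g ≤ lmNormE n p φ w h := by
  unfold lmNormE
  gcongr
  exact hgh _

lemma lmNormE_const_mul (hp : 0 < p) (φ : ℝ → ℝ≥0∞) (w g : Euc n → ℝ≥0∞) {c : ℝ≥0∞}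
    (hc : c ≠ ⊤) : lmNormE n p φ w (fun x => c * g x) = c * lmNormE n p φ w g := by
  simp only [lmNormE, ENNReal.mul_iSup]
  refine iSup_congr fun R => iSup_congr fun _ => ?_
  have h_integral : ∫⁻ x in ball 0 R, (c * g x) ^ p * w x =
      c ^ p * ∫⁻ x in ball 0 R, g x ^ p * w x := by
    simp only [ENNReal.mul_rpow_of_nonneg _ _ hp.le, mul_assoc]
    exact lintegral_const_mul' _ _ (by finiteness)
  rw [h_integral, mul_left_comm, ENNReal.mul_rpow_of_nonneg _ _ (one_div_nonneg.2 hp.le),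
    ← ENNReal.rpow_mul, mul_one_div_cancel hp.ne', ENNReal.rpow_one]

lemma lmNormE_le_of_annulus (hn : 0 < n) (hp : 0 < p) {lam β : ℝ} {g : Euc n → ℝ≥0∞}
    {B : ℝ≥0∞} (h : ∀ t, 0 < t → ∫⁻ x in annulus n (1 / 2) 1, g (t • x) ^ p * powW n β p x ≤
      (phiS (-(β + (n - lam) / p)) t * B) ^ p) :
    lmNormE n p (phiS lam) (powW n β p) g ≤ (1 - phiS lam (1 / 2))⁻¹ ^ (1 / p) * B := by
  have h_exp : lam = n + β * p + -(β + (n - lam) / p) * p := by field_simp; ring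
  have h_shell (t : ℝ) (ht : 0 < t) :
      ∫⁻ x in annulus n (t / 2) t, g x ^ p * powW n β p x ≤ B ^ p * phiS lam t := by
    have h_dilate : phiS (β * p) t * ∫⁻ x in annulus n (1 / 2) 1, g (t • x) ^ p * powW n β p x =
        phiS (-n) t * ∫⁻ x in annulus n (t / 2) t, g x ^ p * powW n β p x := by
      rw [← setLIntegral_annulus_comp_smul (fun x => g x ^ p * powW n β p x) ht,
        ← lintegral_const_mul' _ _ (phiS_ne_top _ _)]
      exact lintegral_congr fun x => by rw [powW_smul β p ht, mul_left_comm]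
    calc ∫⁻ x in annulus n (t / 2) t, g x ^ p * powW n β p x
        = phiS (n + β * p) t * ∫⁻ x in annulus n (1 / 2) 1, g (t • x) ^ p * powW n β p x := by
          rw [phiS_add _ _ ht, mul_assoc, h_dilate, ← mul_assoc, phiS_mul_phiS_neg _ ht, one_mul]
      _ ≤ phiS (n + β * p) t * (phiS (-(β + (n - lam) / p)) t * B) ^ p := by
          gcongr
          exact h t ht
      _ = B ^ p * phiS lam t := by
          rw [ENNReal.mul_rpow_of_nonneg _ _ hp.le, phiS_rpow _ _ ht, ← mul_assoc,
            ← phiS_add _ _ ht, ← h_exp, mul_comm]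
  refine lmNormE_le_of_setLIntegral_ball_le hp fun R hR => ?_
  refine (setLIntegral_ball_le_of_annulus hn h_shell hR).trans_eq ?_
  rw [ENNReal.mul_rpow_of_nonneg _ _ hp.le, ← ENNReal.rpow_mul, one_div_mul_cancel hp.ne',
    ENNReal.rpow_one]
  ring

end LocalMorrey

section Sufficiency

variable {n : ℕ} {p q : ℝ}

lemma setLIntegral_annulus_rpow_le_lmNormE (hp : 0 < p) (lam β : ℝ) (g : Euc n → ℝ≥0∞) :
    ∫⁻ x in annulus n (1 / 4) 2, g x ^ p ≤
      phiS |β * p| 4 * phiS lam 2 * lmNormE n p (phiS lam) (powW n β p) g ^ p := by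
  calc ∫⁻ x in annulus n (1 / 4) 2, g x ^ p
      ≤ ∫⁻ x in annulus n (1 / 4) 2, phiS |β * p| 4 * (g x ^ p * powW n β p x) :=
        setLIntegral_mono' (measurableSet_annulus n _ _) fun x hx => by
          rw [mul_left_comm]
          exact le_mul_of_one_le_right' (one_le_phiS_abs_mul_phiS_norm_of_mem_annulus _ hx)
    _ = phiS |β * p| 4 * ∫⁻ x in annulus n (1 / 4) 2, g x ^ p * powW n β p x :=
        lintegral_const_mul' _ _ (phiS_ne_top _ _)
    _ ≤ phiS |β * p| 4 * (phiS lam 2 * lmNormE n p (phiS lam) (powW n β p) g ^ p) := by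
        gcongr
        exact (lintegral_mono_set (annulus_subset_ball n _ _)).trans
          (setLIntegral_ball_le_lmNormE hp lam _ g two_pos)
    _ = phiS |β * p| 4 * phiS lam 2 * lmNormE n p (phiS lam) (powW n β p) g ^ p :=
        (mul_assoc _ _ _).symm

lemma exists_setLIntegral_annulus_le_lmNormE (n : ℕ) (hp : 1 < p) (lam β : ℝ) :
    ∃ D : ℝ≥0∞, D ≠ ⊤ ∧ ∀ g : Euc n → ℝ≥0∞, Measurable g →
      ∫⁻ x in annulus n (1 / 2) 1, g x ≤ D * lmNormE n p (phiS lam) (powW n β p) g := by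
  have hp0 : 0 < p := one_pos.trans hp
  have h_inv : 0 ≤ 1 - 1 / p := sub_nonneg.2 ((div_le_one hp0).2 hp.le)
  have h_vol := volume_annulus_ne_top (n := n) (1 / 2) 1
  refine ⟨(phiS |β * p| 4 * phiS lam 2) ^ (1 / p) * volume (annulus n (1 / 2) 1) ^ (1 - 1 / p),
    by finiteness [phiS_ne_top |β * p| 4, phiS_ne_top lam 2], fun g hg => ?_⟩
  calc ∫⁻ x in annulus n (1 / 2) 1, g x
      ≤ (∫⁻ x in annulus n (1 / 2) 1, g x ^ p) ^ (1 / p) *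
          volume (annulus n (1 / 2) 1) ^ (1 - 1 / p) := by
        simpa only [Measure.restrict_apply_univ] using
          lintegral_le_lintegral_rpow_mul_measure_univ hg.aemeasurable.restrict hp
    _ ≤ (phiS |β * p| 4 * phiS lam 2 * lmNormE n p (phiS lam) (powW n β p) g ^ p) ^ (1 / p) *
          volume (annulus n (1 / 2) 1) ^ (1 - 1 / p) := by
        gcongr
        exact (lintegral_mono_set annulus_half_one_subset).trans
          (setLIntegral_annulus_rpow_le_lmNormE hp0 lam β g)
    _ = (phiS |β * p| 4 * phiS lam 2) ^ (1 / p) * volume (annulus n (1 / 2) 1) ^ (1 - 1 / p) *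
          lmNormE n p (phiS lam) (powW n β p) g := by
        rw [ENNReal.mul_rpow_of_nonneg _ _ (one_div_nonneg.2 hp0.le), ← ENNReal.rpow_mul,
          mul_one_div_cancel hp0.ne', ENNReal.rpow_one, mul_right_comm]

lemma exists_setLIntegral_ball_le_lmNormE (hn : 0 < n) (hp : 1 < p) {lam β : ℝ}
    (h_lt : β + (n - lam) / p < n) :
    ∃ D : ℝ≥0∞, D ≠ ⊤ ∧ ∀ g : Euc n → ℝ≥0∞, Measurable g → ∀ R, 0 < R →
      ∫⁻ x in ball 0 R, g x ≤ D * lmNormE n p (phiS lam) (powW n β p) g *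
        phiS (n - (β + (n - lam) / p)) R := by
  obtain ⟨D, hD, h_annulus⟩ := exists_setLIntegral_annulus_le_lmNormE n hp lam β
  refine ⟨D * (1 - phiS (n - (β + (n - lam) / p)) (1 / 2))⁻¹,
    ENNReal.mul_ne_top hD (inv_one_sub_phiS_half_ne_top (sub_pos.2 h_lt)), fun g hg R hR => ?_⟩
  rw [mul_right_comm D]
  refine setLIntegral_ball_le_of_annulus hn (fun t ht => ?_) hR
  calc ∫⁻ x in annulus n (t / 2) t, g x
      = phiS n t * ∫⁻ x in annulus n (1 / 2) 1, g (t • x) := by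
        rw [setLIntegral_annulus_comp_smul g ht, ← mul_assoc, phiS_mul_phiS_neg _ ht, one_mul]
    _ ≤ phiS n t * (D * lmNormE n p (phiS lam) (powW n β p) fun x => g (t • x)) := by
        gcongr
        exact h_annulus _ (by fun_prop)
    _ = D * lmNormE n p (phiS lam) (powW n β p) g * phiS (n - (β + (n - lam) / p)) t := by
        rw [lmNormE_comp_smul (one_pos.trans hp) lam β g ht, sub_eq_add_neg (n : ℝ) (β + _),
          phiS_add _ _ ht]
        ring

variable {α γ : ℝ} {g : Euc n → ℝ≥0∞}

lemma volume_ball_rpow_mul_setLIntegral_le_of_le (hγα : γ ≤ α) {x c : Euc n} {r : ℝ}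
    (hx : x ∈ annulus n (1 / 2) 1) (hr : 0 < r) (hxc : x ∈ ball c r) (hr_le : r ≤ 1 / 8) :
    volume (ball c r) ^ (α / n - 1) * ∫⁻ y in ball c r, g y ≤
      volume (ball (0 : Euc n) 1) ^ ((α - γ) / n) *
        fracMax n γ ((annulus n (1 / 4) 2).indicator g) x := by
  have h_exp : α / n - 1 = (α - γ) / n + (γ / n - 1) := by ring
  have h_sub : ball c r ⊆ annulus n (1 / 4) 2 := fun y hy => by
    obtain ⟨h_half, h_one⟩ := mem_annulus.1 hx
    have h_dist : dist x y < 2 * r := by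
      linarith [dist_triangle_right x y c, mem_ball.1 hxc, mem_ball.1 hy]
    rw [dist_eq_norm] at h_dist
    refine mem_annulus.2 ⟨?_, ?_⟩
    · linarith [norm_le_insert' x y]
    · linarith [norm_le_insert x y]
  have h_indicator : ∫⁻ y in ball c r, g y =
      ∫⁻ y in ball c r, (annulus n (1 / 4) 2).indicator g y :=
    setLIntegral_congr_fun measurableSet_ball fun y hy => (indicator_of_mem (h_sub hy) g).symm
  rw [h_exp, ENNReal.rpow_add _ _ (volume_ball_ne_zero c hr) (volume_ball_ne_top c r), mul_assoc,
    h_indicator]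
  refine mul_le_mul' ?_ (le_fracMax hr hxc)
  refine ENNReal.rpow_le_rpow ?_ (div_nonneg (sub_nonneg.2 hγα) n.cast_nonneg)
  rw [Measure.addHaar_ball_center]
  gcongr
  linarith

lemma volume_ball_rpow_mul_setLIntegral_le_of_lt (hn : 0 < n) {s : ℝ} (hs : α - n + s ≤ 0)
    {B : ℝ≥0∞} (h_ball : ∀ R, 0 < R → ∫⁻ y in ball 0 R, g y ≤ B * phiS s R) {x c : Euc n} {r : ℝ}
    (hx : x ∈ annulus n (1 / 2) 1) (hxc : x ∈ ball c r) (hr : 1 / 8 < r) :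
    volume (ball c r) ^ (α / n - 1) * ∫⁻ y in ball c r, g y ≤
      volume (ball (0 : Euc n) 1) ^ (α / n - 1) * phiS s 10 * phiS (α - n + s) (1 / 8) * B := by
  have hr0 : 0 < r := by linarith
  have h_exp : n * (α / n - 1) = α - n := by field_simp
  have h_sub : ball c r ⊆ ball 0 (10 * r) := fun y hy => by
    have h_dist : dist y x < 2 * r := by
      linarith [dist_triangle_right y x c, mem_ball.1 hxc, mem_ball.1 hy]
    rw [dist_eq_norm] at h_dist
    rw [mem_ball_zero_iff]
    linarith [norm_le_insert' y x, (mem_annulus.1 hx).2]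
  calc volume (ball c r) ^ (α / n - 1) * ∫⁻ y in ball c r, g y
      ≤ phiS (α - n) r * volume (ball (0 : Euc n) 1) ^ (α / n - 1) *
          (B * (phiS s 10 * phiS s r)) := by
        rw [volume_ball_rpow c hr0, h_exp, ← phiS_mul s (by norm_num) hr0.le]
        gcongr
        exact (lintegral_mono_set h_sub).trans (h_ball _ (by positivity))
    _ = volume (ball (0 : Euc n) 1) ^ (α / n - 1) * phiS s 10 * phiS (α - n + s) r * B := by
        rw [phiS_add _ _ hr0]
        ring
    _ ≤ volume (ball (0 : Euc n) 1) ^ (α / n - 1) * phiS s 10 * phiS (α - n + s) (1 / 8) * B := by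
        gcongr
        exact phiS_anti hs (by norm_num) hr.le

lemma fracMax_le_of_mem_annulus (hn : 0 < n) (hγα : γ ≤ α) {s : ℝ} (hs : α - n + s ≤ 0)
    {B : ℝ≥0∞} (h_ball : ∀ R, 0 < R → ∫⁻ y in ball 0 R, g y ≤ B * phiS s R) {x : Euc n}
    (hx : x ∈ annulus n (1 / 2) 1) :
    fracMax n α g x ≤ volume (ball (0 : Euc n) 1) ^ ((α - γ) / n) *
        fracMax n γ ((annulus n (1 / 4) 2).indicator g) x +
      volume (ball (0 : Euc n) 1) ^ (α / n - 1) * phiS s 10 * phiS (α - n + s) (1 / 8) * B := by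
  refine fracMax_le fun c r hr hxc => ?_
  rcases le_or_gt r (1 / 8) with hr_le | hr_lt
  · exact le_add_right (volume_ball_rpow_mul_setLIntegral_le_of_le hγα hx hr hxc hr_le)
  · exact le_add_left (volume_ball_rpow_mul_setLIntegral_le_of_lt hn hs h_ball hx hxc hr_lt)

lemma exists_lintegral_fracMax_indicator_annulus_rpow_le (hn : 0 < n) (hγ : 0 ≤ γ) (hp : 1 < p)
    (hq : 0 < q) (hpq : 1 / p - 1 / q = γ / n) (lam β : ℝ) :
    ∃ D : ℝ≥0∞, D ≠ ⊤ ∧ ∀ g : Euc n → ℝ≥0∞, Measurable g →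
      ∫⁻ x, fracMax n γ ((annulus n (1 / 4) 2).indicator g) x ^ q ≤
        D * lmNormE n p (phiS lam) (powW n β p) g ^ q := by
  have hp0 : 0 < p := one_pos.trans hp
  obtain ⟨C, hC, h_fracMax⟩ := exists_lintegral_fracMax_rpow_le hn hγ hp hq hpq
  refine ⟨C * (phiS |β * p| 4 * phiS lam 2) ^ (q / p),
    by finiteness [phiS_ne_top |β * p| 4, phiS_ne_top lam 2], fun g hg => ?_⟩
  have h_rpow : ∫⁻ x, (annulus n (1 / 4) 2).indicator g x ^ p =
      ∫⁻ x in annulus n (1 / 4) 2, g x ^ p := by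
    rw [← lintegral_indicator (measurableSet_annulus n _ _)]
    exact lintegral_congr fun x => (congrFun (indicator_comp_of_zero (g := fun a : ℝ≥0∞ => a ^ p)
      (ENNReal.zero_rpow_of_pos hp0)) x).symm
  calc ∫⁻ x, fracMax n γ ((annulus n (1 / 4) 2).indicator g) x ^ q
      ≤ C * (∫⁻ x in annulus n (1 / 4) 2, g x ^ p) ^ (q / p) := by
        rw [← h_rpow]
        exact h_fracMax _ (hg.indicator (measurableSet_annulus n _ _))
    _ ≤ C * (phiS |β * p| 4 * phiS lam 2 *
          lmNormE n p (phiS lam) (powW n β p) g ^ p) ^ (q / p) := by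
        gcongr
        exact setLIntegral_annulus_rpow_le_lmNormE hp0 lam β g
    _ = C * (phiS |β * p| 4 * phiS lam 2) ^ (q / p) *
          lmNormE n p (phiS lam) (powW n β p) g ^ q := by
        rw [ENNReal.mul_rpow_of_nonneg _ _ (by positivity), ← ENNReal.rpow_mul,
          mul_div_cancel₀ q hp0.ne', mul_assoc]

lemma exists_fracMax_le_of_mem_annulus (hn : 0 < n) (hγα : γ ≤ α) (hp : 1 < p) {lam β : ℝ}
    (h_le : α ≤ β + (n - lam) / p) (h_lt : β + (n - lam) / p < n) :
    ∃ K₁ K₂ : ℝ≥0∞, K₁ ≠ ⊤ ∧ K₂ ≠ ⊤ ∧ ∀ g : Euc n → ℝ≥0∞, Measurable g →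
      ∀ x ∈ annulus n (1 / 2) 1,
        fracMax n α g x ≤ K₁ * fracMax n γ ((annulus n (1 / 4) 2).indicator g) x +
          K₂ * lmNormE n p (phiS lam) (powW n β p) g := by
  obtain ⟨D, hD, h_ball⟩ := exists_setLIntegral_ball_le_lmNormE hn hp h_lt
  set s := n - (β + (n - lam) / p)
  have hs : α - n + s ≤ 0 := by linarith
  have h_vol (r : ℝ) : volume (ball (0 : Euc n) 1) ^ r ≠ ⊤ :=
    ENNReal.rpow_ne_top_of_ne_zero (volume_ball_ne_zero 0 one_pos) (volume_ball_ne_top 0 1)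
  refine ⟨volume (ball (0 : Euc n) 1) ^ ((α - γ) / n),
    volume (ball (0 : Euc n) 1) ^ (α / n - 1) * phiS s 10 * phiS (α - n + s) (1 / 8) * D,
    h_vol _, ?_, fun g hg x hx => ?_⟩
  · finiteness [h_vol (α / n - 1), phiS_ne_top s 10, phiS_ne_top (α - n + s) (1 / 8)]
  · rw [mul_assoc _ D]
    exact fracMax_le_of_mem_annulus hn hγα hs (h_ball g hg) hx

lemma setLIntegral_annulus_rpow_mul_powW_le (hq : 0 < q) (β : ℝ) {u v : Euc n → ℝ≥0∞} {b : ℝ≥0∞}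
    (h : ∀ x ∈ annulus n (1 / 2) 1, u x ≤ v x + b) :
    ∫⁻ x in annulus n (1 / 2) 1, u x ^ q * powW n β q x ≤
      LpAddConst (ENNReal.ofReal q)⁻¹ * phiS |β * q| 4 *
        ((∫⁻ x, v x ^ q) + b ^ q * volume (annulus n (1 / 2) 1)) := by
  calc ∫⁻ x in annulus n (1 / 2) 1, u x ^ q * powW n β q x
      ≤ ∫⁻ x in annulus n (1 / 2) 1,
          LpAddConst (ENNReal.ofReal q)⁻¹ * phiS |β * q| 4 * (v x ^ q + b ^ q) :=
        setLIntegral_mono' (measurableSet_annulus n _ _) fun x hx => by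
          rw [mul_right_comm]
          gcongr
          · exact (ENNReal.rpow_le_rpow (h x hx) hq.le).trans
              (ENNReal.rpow_add_le_mul_rpow_add_rpow' _ _ hq.le)
          · exact phiS_norm_le_of_mem_annulus _ (annulus_half_one_subset hx)
    _ = LpAddConst (ENNReal.ofReal q)⁻¹ * phiS |β * q| 4 *
          ((∫⁻ x in annulus n (1 / 2) 1, v x ^ q) + b ^ q * volume (annulus n (1 / 2) 1)) := by
        rw [lintegral_const_mul' _ _ (ENNReal.mul_ne_top (LpAddConst_lt_top _).ne
          (phiS_ne_top _ _)), lintegral_add_right _ measurable_const, setLIntegral_const]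
    _ ≤ LpAddConst (ENNReal.ofReal q)⁻¹ * phiS |β * q| 4 *
          ((∫⁻ x, v x ^ q) + b ^ q * volume (annulus n (1 / 2) 1)) := by
        gcongr
        exact Measure.restrict_le_self

lemma exists_setLIntegral_annulus_fracMax_rpow_le (hn : 0 < n) (hγ : 0 ≤ γ) (hγα : γ ≤ α)
    (hp : 1 < p) (hq : 0 < q) (hpq : 1 / p - 1 / q = γ / n) {lam β1 : ℝ}
    (h_le : α ≤ β1 + (n - lam) / p) (h_lt : β1 + (n - lam) / p < n) (β2 : ℝ) :
    ∃ D : ℝ≥0∞, D ≠ ⊤ ∧ ∀ g : Euc n → ℝ≥0∞, Measurable g →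
      ∫⁻ x in annulus n (1 / 2) 1, fracMax n α g x ^ q * powW n β2 q x ≤
        (D * lmNormE n p (phiS lam) (powW n β1 p) g) ^ q := by
  obtain ⟨K₁, K₂, hK₁, hK₂, h_fracMax⟩ := exists_fracMax_le_of_mem_annulus hn hγα hp h_le h_lt
  obtain ⟨D, hD, h_near⟩ :=
    exists_lintegral_fracMax_indicator_annulus_rpow_le hn hγ hp hq hpq lam β1
  have h_vol := volume_annulus_ne_top (n := n) (1 / 2) 1
  refine ⟨(LpAddConst (ENNReal.ofReal q)⁻¹ * phiS |β2 * q| 4 *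
    (K₁ ^ q * D + K₂ ^ q * volume (annulus n (1 / 2) 1))) ^ (1 / q),
    by finiteness [(LpAddConst_lt_top (ENNReal.ofReal q)⁻¹).ne, phiS_ne_top |β2 * q| 4],
    fun g hg => (setLIntegral_annulus_rpow_mul_powW_le hq β2 (h_fracMax g hg)).trans ?_⟩
  have h_near_mul : ∫⁻ x, (K₁ * fracMax n γ ((annulus n (1 / 4) 2).indicator g) x) ^ q ≤
      K₁ ^ q * (D * lmNormE n p (phiS lam) (powW n β1 p) g ^ q) := by
    simp only [ENNReal.mul_rpow_of_nonneg _ _ hq.le]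
    rw [lintegral_const_mul' _ _ (by finiteness)]
    gcongr
    exact h_near g hg
  refine (mul_right_mono (add_left_mono h_near_mul)).trans_eq ?_
  rw [ENNReal.mul_rpow_of_nonneg _ _ hq.le, ENNReal.mul_rpow_of_nonneg _ _ hq.le,
    ← ENNReal.rpow_mul, one_div_mul_cancel hq.ne', ENNReal.rpow_one]
  ring

theorem exists_lmNormE_fracMax_le (hn : 0 < n) (hγ : 0 ≤ γ) (hγα : γ ≤ α) (hp : 1 < p)
    (hq : 0 < q) (hpq : 1 / p - 1 / q = γ / n) {lam1 lam2 β1 β2 : ℝ} (hlam2 : 0 < lam2)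
    (h_eq : β2 - β1 - (n - lam1) / p + (n - lam2) / q + α = 0)
    (h_le : α ≤ β1 + (n - lam1) / p) (h_lt : β1 + (n - lam1) / p < n) :
    ∃ C : ℝ≥0∞, C ≠ ⊤ ∧ ∀ g : Euc n → ℝ≥0∞, Measurable g →
      lmNormE n q (phiS lam2) (powW n β2 q) (fracMax n α g) ≤
        C * lmNormE n p (phiS lam1) (powW n β1 p) g := by
  obtain ⟨D, hD, h_annulus⟩ :=
    exists_setLIntegral_annulus_fracMax_rpow_le hn hγ hγα hp hq hpq h_le h_lt β2
  refine ⟨(1 - phiS lam2 (1 / 2))⁻¹ ^ (1 / q) * D,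
    by finiteness [inv_one_sub_phiS_half_ne_top hlam2], fun g hg => ?_⟩
  rw [mul_assoc]
  refine lmNormE_le_of_annulus hn hq fun t ht => ?_
  have h_exp : -(β2 + (n - lam2) / q) = α + -(β1 + (n - lam1) / p) := by linarith
  have h_fracMax (x : Euc n) :
      fracMax n α g (t • x) = phiS α t * fracMax n α (fun y => g (t • y)) x := by
    rw [fracMax_comp_smul hn α g ht, ← mul_assoc, phiS_mul_phiS_neg _ ht, one_mul]
  calc ∫⁻ x in annulus n (1 / 2) 1, fracMax n α g (t • x) ^ q * powW n β2 q x
      = phiS α t ^ q * ∫⁻ x in annulus n (1 / 2) 1,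
          fracMax n α (fun y => g (t • y)) x ^ q * powW n β2 q x := by
        simp only [h_fracMax, ENNReal.mul_rpow_of_nonneg _ _ hq.le, mul_assoc]
        exact lintegral_const_mul' _ _ (by finiteness [phiS_ne_top α t])
    _ ≤ phiS α t ^ q *
          (D * lmNormE n p (phiS lam1) (powW n β1 p) fun y => g (t • y)) ^ q := by
        gcongr
        exact h_annulus _ (by fun_prop)
    _ = (phiS (-(β2 + (n - lam2) / q)) t *
          (D * lmNormE n p (phiS lam1) (powW n β1 p) g)) ^ q := by
        rw [← ENNReal.mul_rpow_of_nonneg _ _ hq.le,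
          lmNormE_comp_smul (one_pos.trans hp) lam1 β1 g ht, h_exp, phiS_add _ _ ht]
        ring_nf

end Sufficiency

section Necessity

variable {n : ℕ} {p q α : ℝ}

lemma lmNormE_phiS_norm_ne_top (hn : 0 < n) (hp : 0 < p) {lam : ℝ} (hlam : 0 < lam) (β : ℝ) :
    lmNormE n p (phiS lam) (powW n β p) (fun x => phiS (-(β + (n - lam) / p)) ‖x‖) ≠ ⊤ := by
  set s := -(β + (n - lam) / p)
  set I := ∫⁻ x in annulus n (1 / 2) 1, phiS s ‖x‖ ^ p * powW n β p x
  have hI : I ≠ ⊤ := by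
    refine (setLIntegral_lt_top_of_le_nnreal (volume_annulus_ne_top _ _)
      ⟨(phiS |s| 4 ^ p * phiS |β * p| 4).toNNReal, fun x hx => ?_⟩).ne
    rw [ENNReal.coe_toNNReal (by finiteness [phiS_ne_top |s| 4, phiS_ne_top |β * p| 4])]
    have hx' := annulus_half_one_subset hx
    exact mul_le_mul' (ENNReal.rpow_le_rpow (phiS_norm_le_of_mem_annulus s hx') hp.le)
      (phiS_norm_le_of_mem_annulus (β * p) hx')
  have h_shell (t : ℝ) (ht : 0 < t) :
      ∫⁻ x in annulus n (1 / 2) 1, phiS s ‖t • x‖ ^ p * powW n β p x =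
        (phiS s t * I ^ (1 / p)) ^ p := by
    simp only [phiS_norm_smul s ht, ENNReal.mul_rpow_of_nonneg _ _ hp.le, mul_assoc]
    rw [lintegral_const_mul' _ _ (by finiteness [phiS_ne_top s t]), ← ENNReal.rpow_mul,
      one_div_mul_cancel hp.ne', ENNReal.rpow_one]
  refine ne_top_of_le_ne_top ?_ (lmNormE_le_of_annulus hn hp fun t ht => (h_shell t ht).le)
  finiteness [inv_one_sub_phiS_half_ne_top hlam]

lemma fracMax_phiS_norm_eq_top_of_add_le_zero (hn : 0 < n) {s : ℝ} (hs : s + n ≤ 0) (x : Euc n) :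
    fracMax n α (fun y => phiS s ‖y‖) x = ⊤ := by
  have hr : 0 < ‖x‖ + 1 := by positivity
  have h_vol : volume (ball (0 : Euc n) (‖x‖ + 1)) ^ (α / n - 1) ≠ 0 :=
    (ENNReal.rpow_pos (measure_ball_pos _ _ hr) (volume_ball_ne_top _ _)).ne'
  rw [← top_le_iff, ← ENNReal.mul_top h_vol, ← setLIntegral_ball_phiS_norm_eq_top hn hs hr]
  exact le_fracMax hr (mem_ball_zero_iff.2 (lt_add_one _))

lemma fracMax_phiS_norm_eq_top_of_pos_add (hn : 0 < n) {s : ℝ} (hs : 0 < α + s) (x : Euc n) :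
    fracMax n α (fun y => phiS s ‖y‖) x = ⊤ := by
  set b := volume (ball (0 : Euc n) 1) ^ (α / n - 1) * ∫⁻ y in annulus n (1 / 2) 1, phiS s ‖y‖
  have hb : b ≠ 0 := mul_ne_zero
    (ENNReal.rpow_pos (measure_ball_pos _ _ one_pos) (volume_ball_ne_top _ _)).ne'
    (setLIntegral_annulus_phiS_norm_ne_zero hn s)
  have h_le (R : ℝ) (hR : ‖x‖ < R) :
      phiS (α + s) R * b ≤ fracMax n α (fun y => phiS s ‖y‖) x := by
    have hR0 : 0 < R := (norm_nonneg x).trans_lt hR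
    have h_exp : α + s = n * (α / n - 1) + (s + n) := by field_simp; ring
    calc phiS (α + s) R * b
        = volume (ball (0 : Euc n) R) ^ (α / n - 1) *
            ∫⁻ y in annulus n (R / 2) R, phiS s ‖y‖ := by
          rw [volume_ball_rpow 0 hR0, setLIntegral_annulus_phiS_norm s hR0, h_exp,
            phiS_add _ _ hR0]
          ring
      _ ≤ volume (ball (0 : Euc n) R) ^ (α / n - 1) * ∫⁻ y in ball (0 : Euc n) R, phiS s ‖y‖ := by
          gcongr
          exact annulus_subset_ball n _ _
      _ ≤ fracMax n α (fun y => phiS s ‖y‖) x := le_fracMax hR0 (mem_ball_zero_iff.2 hR)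
  have h_tendsto : Filter.Tendsto (fun R => phiS (α + s) R * b) Filter.atTop (nhds ⊤) := by
    have h := ENNReal.Tendsto.mul_const (b := b) (tendsto_phiS_atTop hs)
      (Or.inl ENNReal.top_ne_zero)
    rwa [ENNReal.top_mul hb] at h
  exact top_le_iff.1 (le_of_tendsto h_tendsto ((Filter.eventually_gt_atTop ‖x‖).mono h_le))

lemma lmNormE_top_eq_top (hn : 0 < n) (hp : 0 < p) (lam β : ℝ) :
    lmNormE n p (phiS lam) (powW n β p) (fun _ => ⊤) = ⊤ := by
  by_contra h_ne
  have h_le := setLIntegral_ball_le_lmNormE hp lam (powW n β p) (fun _ => ⊤) one_pos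
  have h_annulus : ∫⁻ x in annulus n (1 / 2) 1, ⊤ * powW n β p x = ⊤ := by
    rw [lintegral_const_mul _ (by unfold powW; fun_prop)]
    exact ENNReal.top_mul (setLIntegral_annulus_phiS_norm_ne_zero hn (β * p))
  rw [ENNReal.top_rpow_of_pos hp] at h_le
  have h_top := h_annulus.ge.trans ((lintegral_mono_set (annulus_subset_ball n _ _)).trans h_le)
  exact (ENNReal.mul_ne_top (phiS_ne_top lam 1) (by finiteness)) (top_le_iff.1 h_top)

lemma lmNormE_ne_zero (hn : 0 < n) (hp : 0 < p) (lam β : ℝ) {g : Euc n → ℝ≥0∞}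
    (hg : Measurable g) (hg0 : ∀ x, g x ≠ 0) : lmNormE n p (phiS lam) (powW n β p) g ≠ 0 := by
  intro h_zero
  have h_le := setLIntegral_ball_le_lmNormE hp lam (powW n β p) g one_pos
  rw [h_zero, ENNReal.zero_rpow_of_pos hp, mul_zero, nonpos_iff_eq_zero] at h_le
  have h_annulus : ∫⁻ x in annulus n (1 / 2) 1, g x ^ p * powW n β p x ≠ 0 :=
    setLIntegral_annulus_ne_zero hn (by unfold powW; fun_prop) fun x hx =>
      mul_ne_zero ((ENNReal.rpow_eq_zero_iff_of_pos hp).not.2 (hg0 x))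
        (phiS_norm_ne_zero_of_mem_annulus (β * p) hx)
  exact h_annulus (le_zero_iff.1 ((lintegral_mono_set (annulus_subset_ball n _ _)).trans_eq h_le))

lemma fracMax_ne_zero {g : Euc n → ℝ≥0∞} {R : ℝ} (hR : 0 < R) (h : ∫⁻ y in ball 0 R, g y ≠ 0)
    (x : Euc n) : fracMax n α g x ≠ 0 := by
  have hr : 0 < R + ‖x‖ := by positivity
  refine ne_bot_of_le_ne_bot (mul_ne_zero ?_ ?_)
    (le_fracMax hr (mem_ball_zero_iff.2 (lt_add_of_pos_left ‖x‖ hR)))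
  · exact (ENNReal.rpow_pos (measure_ball_pos _ _ hr) (volume_ball_ne_top _ _)).ne'
  · exact ne_bot_of_le_ne_bot h (lintegral_mono_set (ball_subset_ball (by simp)))

lemma phiS_mul_lmNormE_fracMax_le (hn : 0 < n) (hp : 0 < p) (hq : 0 < q)
    {lam1 lam2 β1 β2 : ℝ} {C : ℝ≥0∞} {g : Euc n → ℝ≥0∞} {t : ℝ} (ht : 0 < t)
    (h : lmNormE n q (phiS lam2) (powW n β2 q) (fracMax n α fun x => g (t • x)) ≤
      C * lmNormE n p (phiS lam1) (powW n β1 p) fun x => g (t • x)) :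
    phiS (β1 + (n - lam1) / p - (β2 + (n - lam2) / q) - α) t *
        lmNormE n q (phiS lam2) (powW n β2 q) (fracMax n α g) ≤
      C * lmNormE n p (phiS lam1) (powW n β1 p) g := by
  have h_exp : β1 + (n - lam1) / p - (β2 + (n - lam2) / q) - α =
      β1 + (n - lam1) / p + (-α + -(β2 + (n - lam2) / q)) := by ring
  have h_dilate : lmNormE n q (phiS lam2) (powW n β2 q) (fracMax n α fun x => g (t • x)) =
      phiS (-α + -(β2 + (n - lam2) / q)) t *
        lmNormE n q (phiS lam2) (powW n β2 q) (fracMax n α g) := by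
    simp only [funext (fracMax_comp_smul hn α g ht)]
    rw [lmNormE_const_mul hq _ _ _ (phiS_ne_top _ _), lmNormE_comp_smul hq _ _ _ ht,
      phiS_add _ _ ht, mul_assoc]
  rw [h_dilate, lmNormE_comp_smul hp _ _ _ ht] at h
  rw [h_exp, phiS_add _ _ ht, mul_assoc]
  calc _ ≤ phiS (β1 + (n - lam1) / p) t * (C * (phiS (-(β1 + (n - lam1) / p)) t *
        lmNormE n p (phiS lam1) (powW n β1 p) g)) := by gcongr
    _ = C * lmNormE n p (phiS lam1) (powW n β1 p) g := by
      rw [mul_left_comm C, ← mul_assoc, phiS_mul_phiS_neg _ ht, one_mul]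

variable {lam1 lam2 β1 β2 : ℝ} {C : ℝ≥0∞}

lemma exponent_eq_zero_of_lmNormE_fracMax_le (hn : 0 < n) (hp : 0 < p) (hq : 0 < q)
    (hlam1 : 0 < lam1) (hC : C ≠ ⊤)
    (h : ∀ g : Euc n → ℝ≥0∞, Measurable g → (∀ x, g x ≠ ⊤) →
      lmNormE n q (phiS lam2) (powW n β2 q) (fracMax n α g) ≤
        C * lmNormE n p (phiS lam1) (powW n β1 p) g) :
    β2 - β1 - (n - lam1) / p + (n - lam2) / q + α = 0 := by
  set f : Euc n → ℝ≥0∞ := fun x => phiS (-(β1 + (n - lam1) / p)) ‖x‖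
  have hf : Measurable f := by fun_prop
  set g := (annulus n (1 / 2) 1).indicator f
  have hg : Measurable g := hf.indicator (measurableSet_annulus n _ _)
  have hg_le : g ≤ f := indicator_le_self _ _
  have hg_norm : lmNormE n p (phiS lam1) (powW n β1 p) g ≠ ⊤ := ne_top_of_le_ne_top
    (lmNormE_phiS_norm_ne_top hn hp hlam1 β1) (lmNormE_mono hp.le _ _ hg_le)
  have hg_ball : ∫⁻ x in ball 0 1, g x ≠ 0 := by
    rw [setLIntegral_indicator (measurableSet_annulus n _ _),
      inter_eq_left.2 (annulus_subset_ball n _ _)]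
    exact setLIntegral_annulus_phiS_norm_ne_zero hn _
  set M := lmNormE n q (phiS lam2) (powW n β2 q) (fracMax n α g)
  have hM : M ≠ 0 := lmNormE_ne_zero hn hq lam2 β2 (measurable_fracMax n α g)
    (fracMax_ne_zero one_pos hg_ball)
  have h_top : C * lmNormE n p (phiS lam1) (powW n β1 p) g / M ≠ ⊤ :=
    ENNReal.div_ne_top (ENNReal.mul_ne_top hC hg_norm) hM
  have h_zero := eq_zero_of_phiS_le h_top fun t ht =>
    (ENNReal.le_div_iff_mul_le (Or.inl hM) (Or.inr (ENNReal.mul_ne_top hC hg_norm))).2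
      (phiS_mul_lmNormE_fracMax_le hn hp hq ht (h (fun x => g (t • x)) (by fun_prop)
        fun x => ne_top_of_le_ne_top (phiS_ne_top _ _) (hg_le (t • x))))
  linarith

lemma mem_Ico_of_lmNormE_fracMax_le (hn : 0 < n) (hp : 0 < p) (hq : 0 < q)
    (hlam1 : 0 < lam1) (hC : C ≠ ⊤)
    (h : ∀ g : Euc n → ℝ≥0∞, Measurable g → (∀ x, g x ≠ ⊤) →
      lmNormE n q (phiS lam2) (powW n β2 q) (fracMax n α g) ≤
        C * lmNormE n p (phiS lam1) (powW n β1 p) g) :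
    β1 + (n - lam1) / p ∈ Ico α n := by
  have h_norm := lmNormE_phiS_norm_ne_top hn hp hlam1 β1
  have not_top : ¬ ∀ x, fracMax n α (fun y => phiS (-(β1 + (n - lam1) / p)) ‖y‖) x = ⊤ := by
    intro h_top
    have h_le := h (fun y => phiS (-(β1 + (n - lam1) / p)) ‖y‖) (by fun_prop)
      fun x => phiS_ne_top _ _
    rw [funext h_top, lmNormE_top_eq_top hn hq] at h_le
    exact ENNReal.mul_ne_top hC h_norm (top_le_iff.1 h_le)
  refine ⟨?_, ?_⟩
  · by_contra! h_lt
    exact not_top (fracMax_phiS_norm_eq_top_of_pos_add hn (by linarith))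
  · by_contra! h_ge
    exact not_top (fracMax_phiS_norm_eq_top_of_add_le_zero hn (by linarith))

end Necessity

lemma lmNormE_fracMax_le_of_forall_real {n : ℕ} {p q α : ℝ} {φ ψ : ℝ → ℝ≥0∞}
    {v w : Euc n → ℝ≥0∞} {C : ℝ≥0∞}
    (h : ∀ f : Euc n → ℝ, Measurable f →
      lmNormE n q ψ v (fracMax n α fun x => ENNReal.ofReal |f x|) ≤ C * lmNorm n p φ w f)
    {g : Euc n → ℝ≥0∞} (hg : Measurable g) (hg_top : ∀ x, g x ≠ ⊤) :
    lmNormE n q ψ v (fracMax n α g) ≤ C * lmNormE n p φ w g := by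
  have h_abs : (fun x => ENNReal.ofReal |(g x).toReal|) = g := funext fun x => by
    rw [abs_of_nonneg ENNReal.toReal_nonneg, ENNReal.ofReal_toReal (hg_top x)]
  simpa only [lmNorm, h_abs] using h (fun x => (g x).toReal) hg.ennreal_toReal

lemma pos_of_one_div_sub_one_div_eq {n p q γ : ℝ} (hp : 0 < p) (hpn : p < n / γ)
    (hpq : 1 / p - 1 / q = γ / n) : 0 < q := by
  have h_lt : γ / n < 1 / p := by
    rw [← inv_div, one_div]
    exact inv_strictAnti₀ hp hpn
  exact one_div_pos.1 (by linarith)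

theorem stmt16_general (n : ℕ) (hn : 0 < n) (α γ : ℝ) (hγ : 0 ≤ γ) (hγα : γ ≤ α)
    (p q : ℝ) (hp : 1 < p) (hq : 0 < q) (hpq : 1 / p - 1 / q = γ / n)
    (lam1 lam2 : ℝ) (hlam1 : 0 < lam1) (hlam2 : 0 < lam2) (β1 β2 : ℝ) :
    (∃ C : ℝ≥0∞, C < ⊤ ∧ ∀ f : Euc n → ℝ, Measurable f →
      lmNormE n q (phiS lam2) (powW n β2 q) (fracMax n α fun x => ENNReal.ofReal |f x|) ≤
        C * lmNorm n p (phiS lam1) (powW n β1 p) f) ↔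
    (β2 - β1 - (n - lam1) / p + (n - lam2) / q + α = 0 ∧
      α ≤ β1 + (n - lam1) / p ∧ β1 + (n - lam1) / p < n) := by
  constructor
  · rintro ⟨C, hC, h⟩
    have h_ennreal (g : Euc n → ℝ≥0∞) (hg : Measurable g) (hg_top : ∀ x, g x ≠ ⊤) :=
      lmNormE_fracMax_le_of_forall_real h hg hg_top
    have hp0 : 0 < p := one_pos.trans hp
    exact ⟨exponent_eq_zero_of_lmNormE_fracMax_le hn hp0 hq hlam1 hC.ne h_ennreal,
      mem_Ico_of_lmNormE_fracMax_le hn hp0 hq hlam1 hC.ne h_ennreal⟩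
  · rintro ⟨h_eq, h_le, h_lt⟩
    obtain ⟨C, hC, h⟩ := exists_lmNormE_fracMax_le hn hγ hγα hp hq hpq hlam2 h_eq h_le h_lt
    exact ⟨C, hC.lt_top, fun f hf => h _ (by fun_prop)⟩

theorem stmt16 (n : ℕ) (hn : 0 < n) (α γ : ℝ) (hα : 0 < α) (hαn : α < n)
    (hγ : 0 ≤ γ) (hγα : γ ≤ α)
    (p q : ℝ) (hp : 1 < p) (hpn : p < n / γ) (hpq : 1 / p - 1 / q = γ / n)
    (lam1 lam2 : ℝ) (hlam1 : 0 < lam1) (hlam2 : 0 < lam2) (β1 β2 : ℝ) :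
    (∃ C : ℝ≥0∞, C < ⊤ ∧ ∀ f : Euc n → ℝ, Measurable f →
      lmNormE n q (phiS lam2) (powW n β2 q) (fracMax n α fun x => ENNReal.ofReal |f x|) ≤
        C * lmNorm n p (phiS lam1) (powW n β1 p) f) ↔
    (β2 - β1 - (n - lam1) / p + (n - lam2) / q + α = 0 ∧
      α ≤ β1 + (n - lam1) / p ∧ β1 + (n - lam1) / p < n) :=
  stmt16_general n hn α γ hγ hγα p q hp
    (pos_of_one_div_sub_one_div_eq (one_pos.trans hp) hpn hpq) hpq lam1 lam2 hlam1 hlam2 β1 β2
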